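/- Suppose Γ is a configuration satisfying the Working Conditions with at least one bad vertex, let φ be an embedding of Γ into ℤ^N, let v_0,…,v_m be the extended bad part of Γ, and suppose v_0 is not a leaf of Γ. If some screw e ∈ supp(φ(v_2)) ∩ supp(φ(v_3)) is not clean, then there exists a vertex v of Γ with w(v) ≥ 4 such that |supp(φ(v)) ∩ supp(φ(v_1))| = |supp(φ(v)) ∩ supp(φ(v_2))| = |supp(φ(v)) ∩ supp(φ(v_3))| = 2. -/

import Mathlib

namespace LensPaper

/-- A finite weighted simple graph: the combinatorial data underlying a configuration
(a disjoint union of weighted linear graphs).  The fact that every connected component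
is a path is recorded separately by `Config.IsLinear`. -/
structure Config where
  V : Type
  fin : Fintype V
  deq : DecidableEq V
  graph : SimpleGraph V
  adjDec : DecidableRel graph.Adj
  w : V → ℤ

attribute [instance] Config.fin Config.deq Config.adjDec

namespace Config

/-- The degree of a vertex. -/
noncomputable def deg (C : Config) (v : C.V) : ℕ := (C.graph.neighborSet v).ncard

/-- A configuration: every component is a path, i.e. all degrees are at most `2` and the
graph is acyclic. -/
def IsLinear (C : Config) : Prop :=
  (∀ v : C.V, C.deg v ≤ 2) ∧ C.graph.IsAcyclic

/-- The adjusted weight `w'(v) = w(v) - deg(v)`. -/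
noncomputable def adjw (C : Config) (v : C.V) : ℤ := C.w v - C.deg v

/-- A vertex is bad if it is adjacent to two distinct vertices of positive adjusted
weight. -/
def IsBad (C : Config) (x : C.V) : Prop :=
  ∃ u v : C.V, u ≠ v ∧ C.graph.Adj x u ∧ C.graph.Adj x v ∧ 0 < C.adjw u ∧ 0 < C.adjw v

/-- A leaf: a vertex of degree at most one. -/
def IsLeaf (C : Config) (v : C.V) : Prop := C.deg v ≤ 1

/-- `v 0, v 1, …, v m` is a chain of consecutive (distinct) vertices. -/
def IsChain (C : Config) (m : ℕ) (v : ℕ → C.V) : Prop :=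
  (∀ i ≤ m, ∀ j ≤ m, v i = v j → i = j) ∧ ∀ i < m, C.graph.Adj (v i) (v (i + 1))

/-- The chain `v 0, …, v m` has the list `p` as its sequence of adjusted weights. -/
def ChainPattern (C : Config) (m : ℕ) (v : ℕ → C.V) (p : List ℤ) : Prop :=
  C.IsChain m v ∧ m + 1 = p.length ∧ ∀ i : Fin p.length, C.adjw (v i) = p.get i

/-- `Γ` contains a chain of consecutive vertices whose adjusted weights, read in order,
form the list `p`. -/
def HasPattern (C : Config) (p : List ℤ) : Prop := ∃ m v, C.ChainPattern m v p

/-- A chain realizing a bad-part pattern `p` (each entry of `p` is an adjusted weight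
together with a flag marking the bad positions): the chain has the prescribed adjusted
weights, and the bad vertices of the configuration are exactly the vertices of the chain
in the flagged positions. -/
def IsBadPartChain (C : Config) (p : List (ℤ × Bool)) (m : ℕ) (v : ℕ → C.V) : Prop :=
  C.IsChain m v ∧ m + 1 = p.length ∧
  (∀ i : Fin p.length, C.adjw (v i) = (p.get i).1) ∧
  (∀ x : C.V, C.IsBad x ↔ ∃ i : Fin p.length, (p.get i).2 = true ∧ v i = x)

end Config

/-- The chains of adjusted weights forbidden by Working Condition VI. -/
def forbiddenPatterns : List (List ℤ) :=
  [[1, 0, 0, 2], [1, 0, 0, 3], [1, 0, 0, 0, 3], [1, 1, 0, 0, 1, 2], [3, 1, 0, 0, 1],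
   [1, 0, 1, 2], [1, 0, 1, 3], [1, 1, 0, 2], [1, 1, 0, 1, 1, 2]]

/-- The bad-part patterns of Working Condition VII; `true` marks the bad positions. -/
def badPatterns : List (List (ℤ × Bool)) :=
  [[(1, false), (0, true), (1, false)],
   [(1, false), (0, true), (2, false)],
   [(1, false), (0, true), (3, false)],
   [(1, false), (1, true), (1, false)],
   [(1, false), (1, true), (2, false)],
   [(1, false), (2, true), (1, false)],
   [(1, false), (0, true), (1, false), (0, true), (1, false)],
   [(1, false), (0, true), (1, false), (0, true), (2, false)],
   [(1, false), (0, true), (1, false), (1, true), (1, false)],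
   [(1, false), (0, true), (1, false), (1, true), (2, false)],
   [(1, false), (1, true), (1, true), (1, false)],
   [(1, false), (1, true), (1, true), (1, true), (1, false)],
   [(1, false), (1, true), (2, true), (1, false)]]

namespace Config

/-- The Working Conditions (I)–(VII). -/
def WorkingConditions (C : Config) : Prop :=
  (∀ v : C.V, 2 ≤ C.w v) ∧
  (∀ v : C.V, C.adjw v ≤ 3) ∧
  (∀ u v : C.V, 1 < C.adjw u → 1 < C.adjw v → u = v) ∧
  (∀ v x : C.V, 1 < C.adjw v → C.IsBad x → C.adjw x = 1 → C.graph.Adj x v) ∧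
  ((∃ v : C.V, C.adjw v = 3) →
     ∀ u u' : C.V, C.graph.Adj u u' → C.adjw u = 1 → C.adjw u' = 1 → False) ∧
  (∀ u v x : C.V, C.graph.Adj u v → C.adjw u = 1 → C.adjw v = 1 →
     C.IsBad x → C.adjw x = 2 → C.graph.Adj x u ∨ C.graph.Adj x v) ∧
  (∀ p ∈ forbiddenPatterns, ¬ C.HasPattern p) ∧
  ((∃ x : C.V, C.IsBad x) → ∃ p ∈ badPatterns, ∃ m v, C.IsBadPartChain p m v)

end Config

/-- The standard inner product on `ℤ^N`. -/
def dot {N : ℕ} (x y : Fin N → ℤ) : ℤ := ∑ i, x i * y i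

/-- The support of a vector of `ℤ^N` with respect to the standard orthonormal basis. -/
def supp {N : ℕ} (x : Fin N → ℤ) : Finset (Fin N) :=
  Finset.univ.filter fun i => x i ≠ 0

namespace Config

/-- An embedding of a configuration into `ℤ^N`. -/
def IsEmbedding (C : Config) (N : ℕ) (φ : C.V → Fin N → ℤ) : Prop :=
  ∀ u v : C.V, dot (φ u) (φ v) =
    if u = v then C.w u else if C.graph.Adj u v then -1 else 0

/-- The restriction of `φ` to `S` is standard. -/
def IsStandardOn (C : Config) (N : ℕ) (φ : C.V → Fin N → ℤ) (S : Set C.V) : Prop :=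
  ∀ u ∈ S, ∀ v ∈ S,
    ((supp (φ u) ∩ supp (φ v)).card : ℤ) =
      if u = v then C.w v else if C.graph.Adj u v then 1 else 0

/-- A standard embedding. -/
def IsStandard (C : Config) (N : ℕ) (φ : C.V → Fin N → ℤ) : Prop :=
  C.IsStandardOn N φ Set.univ

/-- The restriction of `φ` to `S` is semi-standard at `x`. -/
def IsSemiStandardAtOn (C : Config) (N : ℕ) (φ : C.V → Fin N → ℤ) (x : C.V)
    (S : Set C.V) : Prop :=
  (∀ u ∈ S, ∀ v ∈ S,
    ((supp (φ u) ∩ supp (φ v)).card : ℤ) =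
      if u = v then C.w v
      else if C.graph.Adj u v then 1
      else if C.graph.Adj x u ∧ C.graph.Adj x v then 2
      else 0) ∧
  (∀ u ∈ S, ∀ v ∈ S, u ≠ v → C.graph.Adj x u → C.graph.Adj x v →
    (supp (φ u) ∩ supp (φ x) ∩ supp (φ v)).card = 1)

/-- A semi-standard embedding: semi-standard at some bad vertex. -/
def IsSemiStandard (C : Config) (N : ℕ) (φ : C.V → Fin N → ℤ) : Prop :=
  ∃ x : C.V, C.IsBad x ∧ C.IsSemiStandardAtOn N φ x Set.univ

/-- A candidate for the extended bad part: a chain containing the bad part whose two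
ends are either leaves or preceded by two consecutive vertices of vanishing adjusted
weight. -/
def IsEBPCand (C : Config) (m : ℕ) (v : ℕ → C.V) : Prop :=
  C.IsChain m v ∧
  (∀ p ∈ badPatterns, ∀ mb vb, C.IsBadPartChain p mb vb →
     ∀ i ≤ mb, ∃ j ≤ m, v j = vb i) ∧
  (C.IsLeaf (v 0) ∨ (2 ≤ m ∧ C.adjw (v 1) = 0 ∧ C.adjw (v 2) = 0)) ∧
  (C.IsLeaf (v m) ∨ (2 ≤ m ∧ C.adjw (v (m - 1)) = 0 ∧ C.adjw (v (m - 2)) = 0))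

/-- The extended bad part: a candidate with the fewest vertices. -/
def IsExtBadPart (C : Config) (m : ℕ) (v : ℕ → C.V) : Prop :=
  C.IsEBPCand m v ∧ ∀ m' v', C.IsEBPCand m' v' → m ≤ m'

/-- The set of vertices of the chain `v 0, …, v m`. -/
def ebpSet (C : Config) (m : ℕ) (v : ℕ → C.V) : Set C.V := {y | ∃ i ≤ m, v i = y}

/-- The outside part of `Γ` relative to the extended bad part `v 0, …, v m`. -/
def OutsidePart (C : Config) (m : ℕ) (v : ℕ → C.V) : Set C.V :=
  {x | ∀ i ≤ m, v i ≠ x}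
  ∪ {x | ¬ C.IsLeaf (v 0) ∧ (x = v 0 ∨ x = v 1 ∨ x = v 2)}
  ∪ {x | ¬ C.IsLeaf (v m) ∧ (x = v m ∨ x = v (m - 1) ∨ x = v (m - 2))}

/-- A screw at the front end of the extended bad part. -/
def IsFrontScrew (C : Config) (N : ℕ) (φ : C.V → Fin N → ℤ) (m : ℕ) (v : ℕ → C.V)
    (e : Fin N) : Prop :=
  ¬ C.IsLeaf (v 0) ∧ 3 ≤ m ∧ φ (v 2) e ≠ 0 ∧ φ (v 3) e ≠ 0

/-- A screw at the back end of the extended bad part. -/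
def IsBackScrew (C : Config) (N : ℕ) (φ : C.V → Fin N → ℤ) (m : ℕ) (v : ℕ → C.V)
    (e : Fin N) : Prop :=
  ¬ C.IsLeaf (v m) ∧ 3 ≤ m ∧ φ (v (m - 2)) e ≠ 0 ∧ φ (v (m - 3)) e ≠ 0

/-- All screws of `Γ` (with respect to `φ`) are clean. -/
def AllScrewsClean (C : Config) (N : ℕ) (φ : C.V → Fin N → ℤ) (m : ℕ)
    (v : ℕ → C.V) : Prop :=
  (∀ e : Fin N, C.IsFrontScrew N φ m v e →
    ∀ u : C.V, u ≠ v 2 → u ≠ v 3 → φ u e = 0) ∧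
  (∀ e : Fin N, C.IsBackScrew N φ m v e →
    ∀ u : C.V, u ≠ v (m - 2) → u ≠ v (m - 3) → φ u e = 0)

end Config


theorem dot_eq {N : ℕ} (x y : Fin N → ℤ) : dot x y = x ⬝ᵥ y := rfl

theorem dot_single {N : ℕ} (x : Fin N → ℤ) (i : Fin N) (d : ℤ) :
    dot x (Pi.single i d) = x i * d := by
  rw [dot_eq, dotProduct_single]

theorem bessel {N : ℕ} (x : Fin N → ℤ) (S : Finset (Fin N)) :
    ∑ i ∈ S, (x i) ^ 2 ≤ dot x x := by
  unfold dot
  calc ∑ i ∈ S, (x i) ^ 2 ≤ ∑ i, (x i) ^ 2 :=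
        Finset.sum_le_sum_of_subset_of_nonneg (Finset.subset_univ _) (fun _ _ _ => sq_nonneg _)
    _ = _ := by simp [sq]

theorem peel {N : ℕ} (x : Fin N → ℤ) (i : Fin N) :
    ∃ x' : Fin N → ℤ, x = Pi.single i (x i) + x' ∧ x' i = 0 ∧ (∀ j, j ≠ i → x' j = x j) ∧
      dot x' x' = dot x x - x i ^ 2 := by
  refine ⟨x - Pi.single i (x i), by simp, by simp, ?_, ?_⟩
  · intro j hj
    simp [hj]
  · simp only [dot_eq, sub_dotProduct, dotProduct_sub, dotProduct_single, single_dotProduct,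
      Pi.sub_apply, Pi.single_eq_same]
    ring

theorem dot_nonneg {N : ℕ} (x : Fin N → ℤ) : 0 ≤ dot x x := by
  simpa using bessel x ∅

theorem eq_zero_of_dot {N : ℕ} (x : Fin N → ℤ) (h : dot x x = 0) : x = 0 := by
  funext i
  have := bessel x {i}
  simp only [Finset.sum_singleton, h] at this
  have h2 : x i ^ 2 = 0 := le_antisymm this (sq_nonneg _)
  simpa using h2

theorem norm_one {N : ℕ} (x : Fin N → ℤ) (h : dot x x = 1) :
    ∃ i d, d ^ 2 = 1 ∧ x = Pi.single i d := by
  have hx : x ≠ 0 := by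
    rintro rfl
    simp [dot] at h
  obtain ⟨i, hi⟩ := Function.ne_iff.1 hx
  obtain ⟨x', h1, h2, h3, h4⟩ := peel x i
  have h5 := dot_nonneg x'
  have h6 : 0 < x i ^ 2 := by
    have : x i ≠ 0 := hi
    positivity
  have h7 : x' = 0 := eq_zero_of_dot x' (by omega)
  refine ⟨i, x i, by omega, ?_⟩
  rw [h7, add_zero] at h1
  exact h1

theorem norm_two {N : ℕ} (x : Fin N → ℤ) (h : dot x x = 2) :
    ∃ i j d f, i ≠ j ∧ d ^ 2 = 1 ∧ f ^ 2 = 1 ∧ x = Pi.single i d + Pi.single j f := by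
  have hx : x ≠ 0 := by
    rintro rfl
    simp [dot] at h
  obtain ⟨i, hi⟩ := Function.ne_iff.1 hx
  have hi : x i ≠ 0 := hi
  obtain ⟨x', h1, h2, h3, h4⟩ := peel x i
  have h5 := dot_nonneg x'
  have h6 : x i ^ 2 = 1 := by
    have l : x i ^ 2 ≤ 2 := by omega
    have : x i ≤ 1 := by nlinarith
    have : -1 ≤ x i := by nlinarith
    have hc : x i = -1 ∨ x i = 0 ∨ x i = 1 := by omega
    rcases hc with hc | hc | hc
    · rw [hc]; norm_num
    · exact absurd hc hi
    · rw [hc]; norm_num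
  obtain ⟨j, f, hf, hj⟩ := norm_one x' (by omega)
  refine ⟨i, j, x i, f, ?_, h6, hf, by rw [← hj]; exact h1⟩
  rintro rfl
  rw [hj] at h2
  simp at h2
  simp [h2] at hf

theorem sq_one {d : ℤ} (h : d ^ 2 = 1) : d = 1 ∨ d = -1 := by
  simpa using h

theorem frame {N : ℕ} (v1 v2 : Fin N → ℤ) (h1 : dot v1 v1 = 2) (h2 : dot v2 v2 = 2)
    (h12 : dot v2 v1 = -1) :
    ∃ i1 i2 i3 d1 d2 d3, i1 ≠ i2 ∧ i1 ≠ i3 ∧ i2 ≠ i3 ∧ d1 ^ 2 = 1 ∧ d2 ^ 2 = 1 ∧ d3 ^ 2 = 1 ∧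
      v1 = Pi.single i1 d1 + Pi.single i2 (-d2) ∧ v2 = Pi.single i2 d2 + Pi.single i3 (-d3) := by
  obtain ⟨i, j, d, f, hij, hd, hf, rfl⟩ := norm_two v1 h1
  have e : v2 i * d + v2 j * f = -1 := by
    rw [← h12, dot_eq, dotProduct_add, dotProduct_single, dotProduct_single]
  have hb := bessel v2 {i, j}
  rw [Finset.sum_pair hij, h2] at hb
  have key : ∀ (i j : Fin N) (d f : ℤ), i ≠ j → d ^ 2 = 1 → f ^ 2 = 1 → v2 i = 0 → v2 j * f = -1 →
      ∃ i1 i2 i3 d1 d2 d3, i1 ≠ i2 ∧ i1 ≠ i3 ∧ i2 ≠ i3 ∧ d1 ^ 2 = 1 ∧ d2 ^ 2 = 1 ∧ d3 ^ 2 = 1 ∧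
      (Pi.single i d + Pi.single j f : Fin N → ℤ) = Pi.single i1 d1 + Pi.single i2 (-d2) ∧
      v2 = Pi.single i2 d2 + Pi.single i3 (-d3) := by
    intro i j d f hij hd hf hi hj
    obtain ⟨x', p1, p2, p3, p4⟩ := peel v2 j
    have hvj : v2 j = -f := by
      rcases sq_one hf with rfl | rfl <;> omega
    obtain ⟨k, g, hg, hk⟩ := norm_one x' (by rw [p4, h2, hvj]; simp [hf])
    have hg0 : g ≠ 0 := by rintro rfl; simp at hg
    refine ⟨i, j, k, d, -f, -g, hij, ?_, ?_, hd, by simpa using hf, by simpa using hg, by simp, ?_⟩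
    · rintro rfl
      have := p3 i hij
      rw [hk, hi] at this
      simp [hg0] at this
    · rintro rfl
      rw [hk] at p2
      simp [hg0] at p2
    · rw [neg_neg, ← hk, ← hvj]
      exact p1
  have a1 : v2 i ≤ 1 := by nlinarith
  have a2 : -1 ≤ v2 i := by nlinarith
  have b1 : v2 j ≤ 1 := by nlinarith
  have b2 : -1 ≤ v2 j := by nlinarith
  have hcase : (v2 i = 0 ∧ v2 j * f = -1) ∨ (v2 j = 0 ∧ v2 i * d = -1) := by
    rcases sq_one hd with rfl | rfl <;> rcases sq_one hf with rfl | rfl <;> omega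
  rcases hcase with ⟨c1, c2⟩ | ⟨c1, c2⟩
  · exact key i j d f hij hd hf c1 c2
  · rw [add_comm]
    exact key j i f d hij.symm hf hd c1 c2

structure Core (a b : ℤ) (W w : ℤ → ℤ) (α β c : ℤ) : Prop where
  ha : a ≤ -1
  hb : 5 ≤ b
  hw2 : ∀ i, a ≤ i → i ≤ b → 2 ≤ w i
  hW3 : ∀ i, a ≤ i → i ≤ b → W i ≤ 3
  hint : ∀ i, a < i → i < b → w i = W i + 2
  hea : w a = W a + 1
  heb : w b = W b + 1
  huniq : ∀ i j, a ≤ i → i ≤ b → a ≤ j → j ≤ b → 1 < W i → 1 < W j → i = j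
  h4 : ∀ k i, a ≤ k → k ≤ b → W k = 3 → a ≤ i → i + 1 ≤ b → W i = 1 → W (i + 1) = 1 → False
  hp3 : 1 ≤ W 3
  nb1 : a ≤ -2 → 0 < W (-2) → 0 < W 0 → False
  nb2 : a ≤ -3 → 0 < W (-3) → 0 < W (-1) → False
  f1 : W 0 = 1 → W 3 = 2 → False
  f2 : W 0 = 1 → W 3 = 3 → False
  f3 : W 0 = 2 → W 3 = 1 → False
  f4 : W 0 = 3 → W 3 = 1 → False
  f5 : W (-1) = 1 → W 0 = 0 → W 3 = 3 → False
  f6 : W (-1) = 1 → W 0 = 1 → W 3 = 1 → W 4 = 2 → False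
  f7 : W (-1) = 2 → W 0 = 1 → W 3 = 1 → W 4 = 1 → False
  f8 : W 0 = 1 → W 3 = 1 → W 4 = 3 → False
  f9 : W 0 = 1 → W 3 = 1 → W (-1) = 3 → False
  key : ∀ p4 p3 p2 p1 q0 q3 q4 q5 : ℤ, (a ≤ -4 ∨ p4 = 0) → (a ≤ -3 ∨ p3 = 0) →
    (a ≤ -2 ∨ p2 = 0) →
    (q0 * (β - 1) + q3 * α + q4 * c) ^ 2 + (q0 * β + q3 * α + q4 * c) ^ 2
      + (q0 * β + q3 * (α + 1) + q4 * c) ^ 2 ≤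
    p4 ^ 2 * w (-4) + p3 ^ 2 * w (-3) + p2 ^ 2 * w (-2) + p1 ^ 2 * w (-1) + q0 ^ 2 * w 0
      + q3 ^ 2 * w 3 + q4 ^ 2 * w 4 + q5 ^ 2 * w 5
      - 2 * (p4 * p3 + p3 * p2 + p2 * p1 + p1 * q0 + q3 * q4 + q4 * q5)

theorem Core.base {a b : ℤ} {W w : ℤ → ℤ} {α β c : ℤ} (h : Core a b W w α β c) :
    (w 0 = W 0 + 2 ∧ w 3 = W 3 + 2 ∧ w 4 = W 4 + 2 ∧ 2 ≤ w 5 ∧ w 5 ≤ W 5 + 2 ∧ W 5 + 1 ≤ w 5)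
    ∧ (2 ≤ w (-1) ∧ w (-1) ≤ W (-1) + 2 ∧ W (-1) + 1 ≤ w (-1))
    ∧ (0 ≤ W 0 ∧ 0 ≤ W 4 ∧ 0 ≤ W 5 ∧ 0 ≤ W (-1))
    ∧ (W 0 ≤ 3 ∧ W 3 ≤ 3 ∧ W 4 ≤ 3 ∧ W 5 ≤ 3 ∧ W (-1) ≤ 3) := by
  have ha := h.ha
  have hb := h.hb
  have e0 := h.hint 0 (by omega) (by omega)
  have e3 := h.hint 3 (by omega) (by omega)
  have e4 := h.hint 4 (by omega) (by omega)
  have g0 := h.hw2 0 (by omega) (by omega)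
  have g3 := h.hw2 3 (by omega) (by omega)
  have g4 := h.hw2 4 (by omega) (by omega)
  have g5 := h.hw2 5 (by omega) (by omega)
  have g1 := h.hw2 (-1) (by omega) (by omega)
  have t0 := h.hW3 0 (by omega) (by omega)
  have t3 := h.hW3 3 (by omega) (by omega)
  have t4 := h.hW3 4 (by omega) (by omega)
  have t5 := h.hW3 5 (by omega) (by omega)
  have t1 := h.hW3 (-1) (by omega) (by omega)
  have e5 : w 5 = W 5 + 2 ∨ w 5 = W 5 + 1 := by
    rcases eq_or_lt_of_le hb with hh | hh
    · right; have := h.heb; rwa [← hh] at this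
    · left; exact h.hint 5 (by omega) (by omega)
  have e1 : w (-1) = W (-1) + 2 ∨ w (-1) = W (-1) + 1 := by
    rcases eq_or_lt_of_le ha with hh | hh
    · right; have := h.hea; rwa [hh] at this
    · left; exact h.hint (-1) (by omega) (by omega)
  refine ⟨⟨?_, ?_, ?_, ?_, ?_, ?_⟩, ⟨?_, ?_, ?_⟩, ⟨?_, ?_, ?_, ?_⟩, ⟨?_, ?_, ?_, ?_, ?_⟩⟩ <;> omega

theorem Core.ext {a b : ℤ} {W w : ℤ → ℤ} {α β c : ℤ} (h : Core a b W w α β c) (i : ℤ)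
    (hi : a ≤ i := by omega) (hi' : i < b := by omega) :
    2 ≤ w i ∧ 0 ≤ W i ∧ W i ≤ 3 ∧ (a < i → w i = W i + 2) ∧ (¬ a < i → w i = W i + 1) := by
  have g := h.hw2 i hi hi'.le
  have t := h.hW3 i hi hi'.le
  have l1 : a < i → w i = W i + 2 := fun hh => h.hint i hh hi'
  have l2 : ¬ a < i → w i = W i + 1 := fun hh => by
    obtain rfl : i = a := by omega
    exact h.hea
  refine ⟨g, ?_, t, l1, l2⟩
  by_cases hh : a < i
  · have := l1 hh; omega
  · have := l2 hh; omega

theorem Core.at_most {a b : ℤ} {W w : ℤ → ℤ} {α β c : ℤ} (h : Core a b W w α β c) (i : ℤ)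
    (hi : a ≤ i) (hi' : i ≤ b) (h1 : 1 < W i) (j : ℤ) (hj : a ≤ j) (hj' : j ≤ b) (hij : i ≠ j) :
    W j ≤ 1 := by
  by_contra hc
  exact hij (h.huniq i j hi hi' hj hj' h1 (by omega))

theorem Core.ext2 {a b : ℤ} {W w : ℤ → ℤ} {α β c : ℤ} (h : Core a b W w α β c) (i : ℤ)
    (hi : a ≤ i := by omega) (hi' : i < b := by omega) : 2 ≤ w i ∧ w i ≤ W i + 2 ∧ 0 ≤ W i ∧ W i ≤ 3 := by
  obtain ⟨h1, h2, h3, h4, h5⟩ := h.ext i hi hi'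
  refine ⟨h1, ?_, h2, h3⟩
  by_cases hh : a < i
  · exact (h4 hh).le
  · have := h5 hh; omega

theorem Core.pos {a b : ℤ} {W w : ℤ → ℤ} {α β c : ℤ} (h : Core a b W w α β c) (i : ℤ)
    (hi : a ≤ i := by omega) (hi' : i < b := by omega) (h0 : W i = 0 := by omega) : a < i := by
  obtain ⟨h1, h2, h3, h4, h5⟩ := h.ext i hi hi'
  by_contra hh
  have := h5 hh; omega

theorem Core.hend {a b : ℤ} {W w : ℤ → ℤ} {α β c : ℤ} (h : Core a b W w α β c) (i : ℤ)
    (hi : a ≤ i := by omega) (hi' : ¬ a < i := by omega) : w i = W i + 1 := by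
  obtain rfl : i = a := by omega
  exact h.hea


theorem Core.le1 {a b : ℤ} {W w : ℤ → ℤ} {α β c : ℤ} (h : Core a b W w α β c) (i j : ℤ)
    (hi : a ≤ i ∧ i ≤ b ∧ a ≤ j ∧ j ≤ b ∧ i ≠ j ∧ 1 < W i := by omega) : W j ≤ 1 :=
  h.at_most i hi.1 hi.2.1 hi.2.2.2.2.2 j hi.2.2.1 hi.2.2.2.1 hi.2.2.2.2.1

theorem Core.no4 {a b : ℤ} {W w : ℤ → ℤ} {α β c : ℤ} (h : Core a b W w α β c) (k i j : ℤ)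
    (hi : a ≤ k ∧ k ≤ b ∧ a ≤ i ∧ j ≤ b ∧ j = i + 1 ∧ W k = 3 ∧ W i = 1 ∧ W j = 1 := by omega) :
    False := by
  obtain ⟨h1, h2, h3, h4, rfl, h6, h7, h8⟩ := hi
  exact h.h4 k i h1 h2 h6 h3 h4 h7 h8

theorem Core.nopat {a b : ℤ} {W w : ℤ → ℤ} {α β c : ℤ} (h : Core a b W w α β c)
    (hp : (a ≤ -2 ∧ 0 < W (-2) ∧ 0 < W 0) ∨ (a ≤ -3 ∧ 0 < W (-3) ∧ 0 < W (-1)) ∨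
      (W 0 = 1 ∧ W 3 = 2) ∨ (W 0 = 1 ∧ W 3 = 3) ∨ (W 0 = 2 ∧ W 3 = 1) ∨ (W 0 = 3 ∧ W 3 = 1) ∨
      (W (-1) = 1 ∧ W 0 = 0 ∧ W 3 = 3) ∨ (W (-1) = 1 ∧ W 0 = 1 ∧ W 3 = 1 ∧ W 4 = 2) ∨
      (W (-1) = 2 ∧ W 0 = 1 ∧ W 3 = 1 ∧ W 4 = 1) ∨ (W 0 = 1 ∧ W 3 = 1 ∧ W 4 = 3) ∨
      (W 0 = 1 ∧ W 3 = 1 ∧ W (-1) = 3) := by omega) : False := by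
  rcases hp with ⟨x, y, z⟩ | ⟨x, y, z⟩ | ⟨x, y⟩ | ⟨x, y⟩ | ⟨x, y⟩ | ⟨x, y⟩ | ⟨x, y, z⟩ |
    ⟨x, y, z, t⟩ | ⟨x, y, z, t⟩ | ⟨x, y, z⟩ | ⟨x, y, z⟩
  · exact h.nb1 x y z
  · exact h.nb2 x y z
  · exact h.f1 x y
  · exact h.f2 x y
  · exact h.f3 x y
  · exact h.f4 x y
  · exact h.f5 x y z
  · exact h.f6 x y z t
  · exact h.f7 x y z t
  · exact h.f8 x y z
  · exact h.f9 x y z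

theorem Core.kk {a b : ℤ} {W w : ℤ → ℤ} {α β c : ℤ} (h : Core a b W w α β c)
    (p4 p3 p2 p1 q0 q3 q4 q5 : ℤ)
    (hp : (a ≤ -4 ∨ p4 = 0) ∧ (a ≤ -3 ∨ p3 = 0) ∧ (a ≤ -2 ∨ p2 = 0) := by omega) :
    (q0 * (β - 1) + q3 * α + q4 * c) ^ 2 + (q0 * β + q3 * α + q4 * c) ^ 2
      + (q0 * β + q3 * (α + 1) + q4 * c) ^ 2 ≤
    p4 ^ 2 * w (-4) + p3 ^ 2 * w (-3) + p2 ^ 2 * w (-2) + p1 ^ 2 * w (-1) + q0 ^ 2 * w 0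
      + q3 ^ 2 * w 3 + q4 ^ 2 * w 4 + q5 ^ 2 * w 5
      - 2 * (p4 * p3 + p3 * p2 + p2 * p1 + p1 * q0 + q3 * q4 + q4 * q5) :=
  h.key _ _ _ _ _ _ _ _ hp.1 hp.2.1 hp.2.2


theorem Core.case_0_0_m1 {a b : ℤ} {W w : ℤ → ℤ} (h : Core a b W w 0 0 (-1)) :
    False := by
  have ha := h.ha
  have hb := h.hb
  obtain ⟨⟨e0, e3, e4, g5, e5, e5'⟩, ⟨g1, e1, e1'⟩, ⟨z0, z4, z5, z1⟩, ⟨t0, t3, t4, t5, t1⟩⟩ := h.base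
  have hp3 := h.hp3
  rcases (by omega : W 4 = 0 ∨ W 4 = 1 ∨ W 4 = 2 ∨ W 4 = 3) with x4 | x4 | x4 | x4
  · have k := h.kk 0 0 0 0 0 0 1 0
    norm_num at k
    omega
  · have k := h.kk 0 0 0 0 0 0 3 1
    norm_num at k
    omega
  · have mm1 := h.le1 4 (-1)
    have m0 := h.le1 4 0
    have m3 := h.le1 4 3
    have m5 := h.le1 4 5
    rcases (by omega : W 0 = 0 ∨ W 0 = 1) with x0 | x0
    · have k := h.kk 0 0 0 1 3 0 2 0
      norm_num at k
      omega
    · rcases (by omega : W (-1) = 0 ∨ W (-1) = 1) with xm1 | xm1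
      · have c2 : a ≤ -2 := by have := h.pos (-1); omega
        obtain ⟨y2, y2a, y2b, y2c⟩ := h.ext2 (-2)
        have m2 := h.le1 4 (-2)
        have k := h.kk 0 0 1 3 5 0 7 2
        norm_num at k
        omega
      · exact h.nopat
  · have mm1 := h.le1 4 (-1)
    have m0 := h.le1 4 0
    have m3 := h.le1 4 3
    have m5 := h.le1 4 5
    rcases (by omega : W 0 = 0 ∨ W 0 = 1) with x0 | x0
    · rcases (by omega : W (-1) = 0 ∨ W (-1) = 1) with xm1 | xm1
      · have k := h.kk 0 0 0 2 4 0 2 1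
        norm_num at k
        omega
      · by_cases c2 : a ≤ -2
        swap
        · have hend := h.hend (-1)
          have k := h.kk 0 0 0 2 4 0 2 1
          norm_num at k
          omega
        obtain ⟨y2, y2a, y2b, y2c⟩ := h.ext2 (-2)
        have m2 := h.le1 4 (-2)
        rcases (by omega : W (-2) = 0 ∨ W (-2) = 1) with xm2 | xm2
        · have c3 : a ≤ -3 := by have := h.pos (-2); omega
          obtain ⟨y3, y3a, y3b, y3c⟩ := h.ext2 (-3)
          have m3 := h.le1 4 (-3)
          have k := h.kk 0 1 3 5 12 0 7 2
          norm_num at k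
          omega
        · exact h.no4 4 (-2) (-1)
    · exact h.nopat

theorem Core.case_0_0_1 {a b : ℤ} {W w : ℤ → ℤ} (h : Core a b W w 0 0 1) :
    False := by
  have ha := h.ha
  have hb := h.hb
  obtain ⟨⟨e0, e3, e4, g5, e5, e5'⟩, ⟨g1, e1, e1'⟩, ⟨z0, z4, z5, z1⟩, ⟨t0, t3, t4, t5, t1⟩⟩ := h.base
  have hp3 := h.hp3
  rcases (by omega : W 3 = 1 ∨ W 3 = 2 ∨ W 3 = 3) with x3 | x3 | x3
  · have k := h.kk 0 0 0 0 (-1) 4 4 0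
    norm_num at k
    omega
  · have mm1 := h.le1 3 (-1)
    have m0 := h.le1 3 0
    have m4 := h.le1 3 4
    have m5 := h.le1 3 5
    have k := h.kk 0 0 0 0 0 2 3 0
    norm_num at k
    omega
  · have mm1 := h.le1 3 (-1)
    have m0 := h.le1 3 0
    have m4 := h.le1 3 4
    have m5 := h.le1 3 5
    have k := h.kk 0 0 0 0 0 1 2 0
    norm_num at k
    omega

theorem Core.case_0_1_m1 {a b : ℤ} {W w : ℤ → ℤ} (h : Core a b W w 0 1 (-1)) :
    False := by
  have ha := h.ha
  have hb := h.hb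
  obtain ⟨⟨e0, e3, e4, g5, e5, e5'⟩, ⟨g1, e1, e1'⟩, ⟨z0, z4, z5, z1⟩, ⟨t0, t3, t4, t5, t1⟩⟩ := h.base
  have hp3 := h.hp3
  rcases (by omega : W 0 = 0 ∨ W 0 = 1 ∨ W 0 = 2 ∨ W 0 = 3) with x0 | x0 | x0 | x0
  · have k := h.kk 0 0 0 1 5 0 0 0
    norm_num at k
    omega
  · have k := h.kk 0 0 0 0 (-8) (-2) 3 0
    norm_num at k
    omega
  · have mm1 := h.le1 0 (-1)
    have m3 := h.le1 0 3
    have m4 := h.le1 0 4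
    have m5 := h.le1 0 5
    have k := h.kk 0 0 0 0 0 0 2 1
    norm_num at k
    omega
  · have mm1 := h.le1 0 (-1)
    have m3 := h.le1 0 3
    have m4 := h.le1 0 4
    have m5 := h.le1 0 5
    have k := h.kk 0 0 0 0 0 0 2 1
    norm_num at k
    omega

theorem Core.case_0_1_0 {a b : ℤ} {W w : ℤ → ℤ} (h : Core a b W w 0 1 0) :
    False := by
  have ha := h.ha
  have hb := h.hb
  obtain ⟨⟨e0, e3, e4, g5, e5, e5'⟩, ⟨g1, e1, e1'⟩, ⟨z0, z4, z5, z1⟩, ⟨t0, t3, t4, t5, t1⟩⟩ := h.base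
  have hp3 := h.hp3
  rcases (by omega : W 0 = 0 ∨ W 0 = 1 ∨ W 0 = 2 ∨ W 0 = 3) with x0 | x0 | x0 | x0
  · have k := h.kk 0 0 0 1 5 0 0 0
    norm_num at k
    omega
  · rcases (by omega : W 3 = 1 ∨ W 3 = 2 ∨ W 3 = 3) with x3 | x3 | x3
    · rcases (by omega : W (-1) = 0 ∨ W (-1) = 1 ∨ W (-1) = 2 ∨ W (-1) = 3) with xm1 | xm1 | xm1 | xm1
      · have k := h.kk 0 0 0 3 6 3 1 0
        norm_num at k
        omega
      · by_cases c2 : a ≤ -2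
        swap
        · have hend := h.hend (-1)
          have k := h.kk 0 0 0 3 6 3 1 0
          norm_num at k
          omega
        obtain ⟨y2, y2a, y2b, y2c⟩ := h.ext2 (-2)
        rcases (by omega : W 4 = 0 ∨ W 4 = 1 ∨ W 4 = 2 ∨ W 4 = 3) with x4 | x4 | x4 | x4
        · have k := h.kk 0 0 1 5 14 9 4 0
          norm_num at k
          omega
        · rcases (by omega : W (-2) = 0 ∨ W (-2) = 1 ∨ W (-2) = 2 ∨ W (-2) = 3) with xm2 | xm2 | xm2 | xm2
          · have k := h.kk 0 0 3 6 15 9 3 1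
            norm_num at k
            omega
          · exact h.nopat
          · have m5 := h.le1 (-2) 5
            exact h.nopat
          · have m5 := h.le1 (-2) 5
            exact h.nopat
        · have m5 := h.le1 4 5
          have mm2 := h.le1 4 (-2)
          exact h.nopat
        · have m5 := h.le1 4 5
          have mm2 := h.le1 4 (-2)
          exact h.nopat
      · have m4 := h.le1 (-1) 4
        have m5 := h.le1 (-1) 5
        rcases (by omega : W 4 = 0 ∨ W 4 = 1) with x4 | x4
        · by_cases c2 : a ≤ -2
          swap
          · have hend := h.hend (-1)
            have k := h.kk 0 0 0 2 6 4 2 1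
            norm_num at k
            omega
          obtain ⟨y2, y2a, y2b, y2c⟩ := h.ext2 (-2)
          have m2 := h.le1 (-1) (-2)
          rcases (by omega : W (-2) = 0 ∨ W (-2) = 1) with xm2 | xm2
          · have c3 : a ≤ -3 := by have := h.pos (-2); omega
            obtain ⟨y3, y3a, y3b, y3c⟩ := h.ext2 (-3)
            have m3 := h.le1 (-1) (-3)
            have k := h.kk 0 1 3 5 17 12 7 2
            norm_num at k
            omega
          · exact h.nopat
        · exact h.nopat
      · have m4 := h.le1 (-1) 4
        have m5 := h.le1 (-1) 5
        exact h.nopat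
    · have mm1 := h.le1 3 (-1)
      have m4 := h.le1 3 4
      have m5 := h.le1 3 5
      exact h.nopat
    · have mm1 := h.le1 3 (-1)
      have m4 := h.le1 3 4
      have m5 := h.le1 3 5
      exact h.nopat
  · have mm1 := h.le1 0 (-1)
    have m3 := h.le1 0 3
    have m4 := h.le1 0 4
    have m5 := h.le1 0 5
    exact h.nopat
  · have mm1 := h.le1 0 (-1)
    have m3 := h.le1 0 3
    have m4 := h.le1 0 4
    have m5 := h.le1 0 5
    exact h.nopat

theorem Core.case_0_1_1 {a b : ℤ} {W w : ℤ → ℤ} (h : Core a b W w 0 1 1) :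
    False := by
  have ha := h.ha
  have hb := h.hb
  obtain ⟨⟨e0, e3, e4, g5, e5, e5'⟩, ⟨g1, e1, e1'⟩, ⟨z0, z4, z5, z1⟩, ⟨t0, t3, t4, t5, t1⟩⟩ := h.base
  have hp3 := h.hp3
  have k := h.kk 0 0 0 0 10 8 11 0
  norm_num at k
  omega

theorem Core.case_m1_0_m1 {a b : ℤ} {W w : ℤ → ℤ} (h : Core a b W w (-1) 0 (-1)) :
    False := by
  have ha := h.ha
  have hb := h.hb
  obtain ⟨⟨e0, e3, e4, g5, e5, e5'⟩, ⟨g1, e1, e1'⟩, ⟨z0, z4, z5, z1⟩, ⟨t0, t3, t4, t5, t1⟩⟩ := h.base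
  have hp3 := h.hp3
  have k := h.kk 0 0 0 0 0 1 1 0
  norm_num at k
  omega

theorem Core.case_m1_0_0 {a b : ℤ} {W w : ℤ → ℤ} (h : Core a b W w (-1) 0 0) :
    False := by
  have ha := h.ha
  have hb := h.hb
  obtain ⟨⟨e0, e3, e4, g5, e5, e5'⟩, ⟨g1, e1, e1'⟩, ⟨z0, z4, z5, z1⟩, ⟨t0, t3, t4, t5, t1⟩⟩ := h.base
  have hp3 := h.hp3
  rcases (by omega : W 3 = 1 ∨ W 3 = 2 ∨ W 3 = 3) with x3 | x3 | x3
  · rcases (by omega : W 0 = 0 ∨ W 0 = 1 ∨ W 0 = 2 ∨ W 0 = 3) with x0 | x0 | x0 | x0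
    · have k := h.kk 0 0 0 1 5 4 0 0
      norm_num at k
      omega
    · rcases (by omega : W 4 = 0 ∨ W 4 = 1 ∨ W 4 = 2 ∨ W 4 = 3) with x4 | x4 | x4 | x4
      · have k := h.kk 0 0 0 1 5 9 4 0
        norm_num at k
        omega
      · rcases (by omega : W (-1) = 0 ∨ W (-1) = 1 ∨ W (-1) = 2 ∨ W (-1) = 3) with xm1 | xm1 | xm1 | xm1
        · have k := h.kk 0 0 0 3 6 9 3 1
          norm_num at k
          omega
        · by_cases c2 : a ≤ -2
          swap
          · have hend := h.hend (-1)
            have k := h.kk 0 0 0 3 6 9 3 1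
            norm_num at k
            omega
          obtain ⟨y2, y2a, y2b, y2c⟩ := h.ext2 (-2)
          rcases (by omega : W (-2) = 0 ∨ W (-2) = 1 ∨ W (-2) = 2 ∨ W (-2) = 3) with xm2 | xm2 | xm2 | xm2
          · have c3 : a ≤ -3 := by have := h.pos (-2); omega
            obtain ⟨y3, y3a, y3b, y3c⟩ := h.ext2 (-3)
            rcases (by omega : W 5 = 0 ∨ W 5 = 1 ∨ W 5 = 2 ∨ W 5 = 3) with x5 | x5 | x5 | x5
            · have k := h.kk 0 0 1 2 5 8 3 1
              norm_num at k
              omega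
            · have k := h.kk 0 1 5 9 22 35 13 4
              norm_num at k
              omega
            · have mm3 := h.le1 5 (-3)
              rcases (by omega : W (-3) = 0 ∨ W (-3) = 1) with xm3 | xm3
              · have c4 : a ≤ -4 := by have := h.pos (-3); omega
                obtain ⟨y4, y4a, y4b, y4c⟩ := h.ext2 (-4)
                have m4 := h.le1 5 (-4)
                have k := h.kk 1 3 5 7 16 25 9 2
                norm_num at k
                omega
              · exact h.nopat
            · have mm3 := h.le1 5 (-3)
              exact h.no4 5 (-1) 0
          · exact h.nopat
          · have m5 := h.le1 (-2) 5
            exact h.nopat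
          · have m5 := h.le1 (-2) 5
            exact h.nopat
        · have m5 := h.le1 (-1) 5
          exact h.nopat
        · have m5 := h.le1 (-1) 5
          exact h.nopat
      · have mm1 := h.le1 4 (-1)
        have m5 := h.le1 4 5
        rcases (by omega : W (-1) = 0 ∨ W (-1) = 1) with xm1 | xm1
        · have c2 : a ≤ -2 := by have := h.pos (-1); omega
          obtain ⟨y2, y2a, y2b, y2c⟩ := h.ext2 (-2)
          have m2 := h.le1 4 (-2)
          rcases (by omega : W (-2) = 0 ∨ W (-2) = 1) with xm2 | xm2
          · have k := h.kk 0 0 2 4 6 8 2 1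
            norm_num at k
            omega
          · exact h.nopat
        · exact h.nopat
      · have mm1 := h.le1 4 (-1)
        have m5 := h.le1 4 5
        exact h.nopat
    · have mm1 := h.le1 0 (-1)
      have m4 := h.le1 0 4
      have m5 := h.le1 0 5
      exact h.nopat
    · have mm1 := h.le1 0 (-1)
      have m4 := h.le1 0 4
      have m5 := h.le1 0 5
      exact h.nopat
  · have mm1 := h.le1 3 (-1)
    have m0 := h.le1 3 0
    have m4 := h.le1 3 4
    have m5 := h.le1 3 5
    rcases (by omega : W 0 = 0 ∨ W 0 = 1) with x0 | x0
    · rcases (by omega : W (-1) = 0 ∨ W (-1) = 1) with xm1 | xm1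
      · have k := h.kk 0 0 0 2 4 2 1 0
        norm_num at k
        omega
      · by_cases c2 : a ≤ -2
        swap
        · have hend := h.hend (-1)
          have k := h.kk 0 0 0 2 4 2 1 0
          norm_num at k
          omega
        obtain ⟨y2, y2a, y2b, y2c⟩ := h.ext2 (-2)
        have m2 := h.le1 3 (-2)
        rcases (by omega : W (-2) = 0 ∨ W (-2) = 1) with xm2 | xm2
        · have k := h.kk 0 0 2 4 10 6 2 1
          norm_num at k
          omega
        · by_cases c3 : a ≤ -3
          swap
          · have hend := h.hend (-2)
            have k := h.kk 0 0 2 4 10 6 2 1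
            norm_num at k
            omega
          obtain ⟨y3, y3a, y3b, y3c⟩ := h.ext2 (-3)
          have m3 := h.le1 3 (-3)
          rcases (by omega : W (-3) = 0 ∨ W (-3) = 1) with xm3 | xm3
          · have c4 : a ≤ -4 := by have := h.pos (-3); omega
            obtain ⟨y4, y4a, y4b, y4c⟩ := h.ext2 (-4)
            have m4 := h.le1 3 (-4)
            have k := h.kk 1 3 5 12 31 19 7 2
            norm_num at k
            omega
          · exact h.nopat
    · exact h.nopat
  · have mm1 := h.le1 3 (-1)
    have m0 := h.le1 3 0
    have m4 := h.le1 3 4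
    have m5 := h.le1 3 5
    rcases (by omega : W 0 = 0 ∨ W 0 = 1) with x0 | x0
    · rcases (by omega : W (-1) = 0 ∨ W (-1) = 1) with xm1 | xm1
      · have c2 : a ≤ -2 := by have := h.pos (-1); omega
        obtain ⟨y2, y2a, y2b, y2c⟩ := h.ext2 (-2)
        have m2 := h.le1 3 (-2)
        rcases (by omega : W (-2) = 0 ∨ W (-2) = 1) with xm2 | xm2
        · have k := h.kk 0 0 2 4 6 2 1 0
          norm_num at k
          omega
        · by_cases c3 : a ≤ -3
          swap
          · have hend := h.hend (-2)
            have k := h.kk 0 0 2 4 6 2 1 0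
            norm_num at k
            omega
          obtain ⟨y3, y3a, y3b, y3c⟩ := h.ext2 (-3)
          have m3 := h.le1 3 (-3)
          rcases (by omega : W (-3) = 0 ∨ W (-3) = 1) with xm3 | xm3
          · have k := h.kk 0 2 4 10 16 6 2 1
            norm_num at k
            omega
          · exact h.no4 3 (-3) (-2)
      · exact h.nopat
    · exact h.nopat

theorem Core.case_m1_0_1 {a b : ℤ} {W w : ℤ → ℤ} (h : Core a b W w (-1) 0 1) :
    False := by
  have ha := h.ha
  have hb := h.hb
  obtain ⟨⟨e0, e3, e4, g5, e5, e5'⟩, ⟨g1, e1, e1'⟩, ⟨z0, z4, z5, z1⟩, ⟨t0, t3, t4, t5, t1⟩⟩ := h.base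
  have hp3 := h.hp3
  rcases (by omega : W 3 = 1 ∨ W 3 = 2 ∨ W 3 = 3) with x3 | x3 | x3
  · have k := h.kk 0 0 0 0 (-2) (-5) 3 0
    norm_num at k
    omega
  · have mm1 := h.le1 3 (-1)
    have m0 := h.le1 3 0
    have m4 := h.le1 3 4
    have m5 := h.le1 3 5
    have k := h.kk 0 0 0 0 0 (-1) 2 0
    norm_num at k
    omega
  · have mm1 := h.le1 3 (-1)
    have m0 := h.le1 3 0
    have m4 := h.le1 3 4
    have m5 := h.le1 3 5
    have k := h.kk 0 0 0 0 0 (-1) 3 0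
    norm_num at k
    omega

theorem Core.case_m1_1_m1 {a b : ℤ} {W w : ℤ → ℤ} (h : Core a b W w (-1) 1 (-1)) :
    False := by
  have ha := h.ha
  have hb := h.hb
  obtain ⟨⟨e0, e3, e4, g5, e5, e5'⟩, ⟨g1, e1, e1'⟩, ⟨z0, z4, z5, z1⟩, ⟨t0, t3, t4, t5, t1⟩⟩ := h.base
  have hp3 := h.hp3
  have k := h.kk 0 0 0 0 0 1 1 0
  norm_num at k
  omega

theorem Core.case_m1_1_0 {a b : ℤ} {W w : ℤ → ℤ} (h : Core a b W w (-1) 1 0) :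
    False := by
  have ha := h.ha
  have hb := h.hb
  obtain ⟨⟨e0, e3, e4, g5, e5, e5'⟩, ⟨g1, e1, e1'⟩, ⟨z0, z4, z5, z1⟩, ⟨t0, t3, t4, t5, t1⟩⟩ := h.base
  have hp3 := h.hp3
  rcases (by omega : W 0 = 0 ∨ W 0 = 1 ∨ W 0 = 2 ∨ W 0 = 3) with x0 | x0 | x0 | x0
  · have k := h.kk 0 0 0 1 5 0 0 0
    norm_num at k
    omega
  · rcases (by omega : W 3 = 1 ∨ W 3 = 2 ∨ W 3 = 3) with x3 | x3 | x3
    · have k := h.kk 0 0 0 (-1) (-5) 4 0 0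
      norm_num at k
      omega
    · have mm1 := h.le1 3 (-1)
      have m4 := h.le1 3 4
      have m5 := h.le1 3 5
      exact h.nopat
    · have mm1 := h.le1 3 (-1)
      have m4 := h.le1 3 4
      have m5 := h.le1 3 5
      exact h.nopat
  · have mm1 := h.le1 0 (-1)
    have m3 := h.le1 0 3
    have m4 := h.le1 0 4
    have m5 := h.le1 0 5
    exact h.nopat
  · have mm1 := h.le1 0 (-1)
    have m3 := h.le1 0 3
    have m4 := h.le1 0 4
    have m5 := h.le1 0 5
    exact h.nopat

theorem Core.case_m1_1_1 {a b : ℤ} {W w : ℤ → ℤ} (h : Core a b W w (-1) 1 1) :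
    False := by
  have ha := h.ha
  have hb := h.hb
  obtain ⟨⟨e0, e3, e4, g5, e5, e5'⟩, ⟨g1, e1, e1'⟩, ⟨z0, z4, z5, z1⟩, ⟨t0, t3, t4, t5, t1⟩⟩ := h.base
  have hp3 := h.hp3
  have k := h.kk 0 0 0 0 7 (-5) 8 0
  norm_num at k
  omega


def Ch (C : Config) (y : ℤ → C.V) (a b : ℤ) : Prop :=
  (∀ i, a ≤ i → i < b → C.graph.Adj (y i) (y (i + 1))) ∧
    (∀ i, a ≤ i → i + 2 ≤ b → y i ≠ y (i + 2))

theorem Ch.path {C : Config} {y : ℤ → C.V} {a b : ℤ} (h : Ch C y a b)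
    (hac : C.graph.IsAcyclic) (i : ℤ) (hi : a ≤ i) (n : ℕ) : i + n + 1 ≤ b →
    ∃ p : C.graph.Walk (y i) (y (i + n + 1)), p.IsPath ∧ p.penultimate = y (i + n) := by
  induction n with
  | zero =>
    intro hb
    have hadj := h.1 i hi (by simp at hb; omega)
    have e : i + ((0 : ℕ) : ℤ) = i := by simp
    rw [e]
    refine ⟨SimpleGraph.Walk.cons hadj SimpleGraph.Walk.nil, ?_, ?_⟩
    · simp [SimpleGraph.Walk.cons_isPath_iff, hadj.ne]
    · simp
  | succ n ih =>
    intro hb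
    push_cast at hb
    obtain ⟨p, hp, hpen⟩ := ih (by omega)
    have hadj := h.1 (i + n + 1) (by omega) (by omega)
    have e : i + ((n + 1 : ℕ) : ℤ) = i + n + 1 := by push_cast; ring
    rw [e]
    have hns : y (i + n + 1 + 1) ∉ p.support := by
      intro hs
      have := hac.eq_penultimate_of_adj_end hp hadj hs
      rw [hpen] at this
      refine h.2 (i + n) (by omega) (by omega) ?_
      rw [← this]
      congr 1
      ring
    exact ⟨p.concat hadj, hp.concat hns hadj, SimpleGraph.Walk.penultimate_concat p hadj⟩

theorem Ch.ne {C : Config} {y : ℤ → C.V} {a b : ℤ} (h : Ch C y a b)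
    (hac : C.graph.IsAcyclic) (i j : ℤ) (hi : a ≤ i) (hij : i < j) (hj : j ≤ b) :
    y i ≠ y j := by
  obtain ⟨n, hn⟩ := Int.eq_ofNat_of_zero_le (show 0 ≤ j - i - 1 by omega)
  have hj' : j = i + n + 1 := by omega
  subst hj'
  obtain ⟨p, hp, hpen⟩ := h.path hac i hi n hj
  have hl := h.1 (i + n) (by omega) (by omega)
  have hne : y i ≠ y (i + n + 1) := by
    intro he
    have hs : y (i + n + 1) ∈ p.support := p.end_mem_support
    cases n with
    | zero =>
      simp only [Nat.cast_zero, add_zero] at he hl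
      exact hl.ne he
    | succ k =>
      push_cast at *
      obtain ⟨q, hq, hqpen⟩ := h.path hac i hi k (by omega)
      have e : i + (k + 1 : ℤ) = i + k + 1 := by ring
      rw [e] at hl he
      have hmem : y (i + k + 1 + 1) ∈ q.support := by
        rw [← he]; exact q.start_mem_support
      have := hac.eq_penultimate_of_adj_end hq hl hmem
      rw [hqpen] at this
      refine h.2 (i + k) (by omega) (by omega) ?_
      rw [← this]
      congr 1
      ring
  exact hne

theorem Ch.facts {C : Config} {y : ℤ → C.V} {a b : ℤ} (h : Ch C y a b)
    (hac : C.graph.IsAcyclic) (i j : ℤ) (hi : a ≤ i) (hij : i < j) (hj : j ≤ b) :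
    y i ≠ y j ∧ (C.graph.Adj (y i) (y j) → j = i + 1) := by
  refine ⟨h.ne hac i j hi hij hj, fun hadj => ?_⟩
  obtain ⟨n, hn⟩ := Int.eq_ofNat_of_zero_le (show 0 ≤ j - i - 1 by omega)
  have hj' : j = i + n + 1 := by omega
  subst hj'
  obtain ⟨p, hp, hpen⟩ := h.path hac i hi n hj
  have := hac.eq_penultimate_of_adj_end hp hadj.symm p.start_mem_support
  rw [hpen] at this
  by_contra hc
  exact h.ne hac i (i + n) hi (by omega) (by omega) this

theorem Ch.inj {C : Config} {y : ℤ → C.V} {a b : ℤ} (h : Ch C y a b)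
    (hac : C.graph.IsAcyclic) (i j : ℤ) (hi : a ≤ i) (hi' : i ≤ b) (hj : a ≤ j) (hj' : j ≤ b)
    (he : y i = y j) : i = j := by
  rcases lt_trichotomy i j with hlt | hlt | hlt
  · exact absurd he (h.facts hac i j hi hlt hj').1
  · exact hlt
  · exact absurd he.symm (h.facts hac j i hj hlt hi').1

theorem Ch.adj {C : Config} {y : ℤ → C.V} {a b : ℤ} (h : Ch C y a b)
    (hac : C.graph.IsAcyclic) (i j : ℤ) (hi : a ≤ i) (hi' : i ≤ b) (hj : a ≤ j) (hj' : j ≤ b) :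
    C.graph.Adj (y i) (y j) ↔ (j = i + 1 ∨ i = j + 1) := by
  constructor
  · intro he
    rcases lt_trichotomy i j with hlt | hlt | hlt
    · exact Or.inl ((h.facts hac i j hi hlt hj').2 he)
    · subst hlt; exact absurd he (C.graph.loopless.irrefl _)
    · exact Or.inr ((h.facts hac j i hj hlt hi').2 he.symm)
  · rintro (rfl | rfl)
    · exact h.1 i hi (by omega)
    · exact (h.1 j hj (by omega)).symm

theorem Ch.card {C : Config} {y : ℤ → C.V} {a b : ℤ} (h : Ch C y a b)
    (hac : C.graph.IsAcyclic) : b - a + 1 ≤ Fintype.card C.V := by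
  have h1 : ((Finset.Icc a b).image y).card ≤ Fintype.card C.V := Finset.card_le_univ _
  rw [Finset.card_image_of_injOn, Int.card_Icc] at h1
  · omega
  · intro i hi j hj he
    simp at hi hj
    exact h.inj hac i j hi.1 hi.2 hj.1 hj.2 he

theorem Ch.extR {C : Config} (hac : C.graph.IsAcyclic) (k : ℕ) :
    ∀ (y : ℤ → C.V) (a b : ℤ), a < b → Ch C y a b → (Fintype.card C.V : ℤ) ≤ b - a + k →
    ∃ y' b', b ≤ b' ∧ Ch C y' a b' ∧ (∀ i, i ≤ b → y' i = y i) ∧ C.deg (y' b') ≤ 1 := by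
  induction k with
  | zero =>
    intro y a b hab h hk
    have := h.card hac
    simp at hk
    omega
  | succ k ih =>
    intro y a b hab h hk
    by_cases hd : C.deg (y b) ≤ 1
    · exact ⟨y, b, le_rfl, h, fun _ _ => rfl, hd⟩
    · push Not at hd
      obtain ⟨z, hz, hne⟩ := Set.exists_ne_of_one_lt_ncard hd (y (b - 1))
      have hz : C.graph.Adj (y b) z := hz
      have hu : ∀ i, i ≤ b → Function.update y (b + 1) z i = y i := fun i hi =>
        Function.update_of_ne (by omega) _ _
      have hu' : Function.update y (b + 1) z (b + 1) = z := Function.update_self _ _ _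
      have hC : Ch C (Function.update y (b + 1) z) a (b + 1) := by
        constructor
        · intro i hi hi'
          rcases eq_or_lt_of_le (show i ≤ b by omega) with rfl | hlt
          · rw [hu i le_rfl, hu']; exact hz
          · rw [hu i hlt.le, hu (i + 1) (by omega)]; exact h.1 i hi hlt
        · intro i hi hi'
          rcases eq_or_lt_of_le (show i ≤ b - 1 by omega) with rfl | hlt
          · rw [hu _ (by omega), show b - 1 + 2 = b + 1 by ring, hu']; exact hne.symm
          · rw [hu i (by omega), hu (i + 2) (by omega)]; exact h.2 i hi (by omega)
      obtain ⟨y', b', h1, h2, h3, h4⟩ := ih (Function.update y (b + 1) z) a (b + 1) (by omega) hC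
        (by push_cast at hk; omega)
      exact ⟨y', b', by omega, h2, fun i hi => by rw [h3 i (by omega), hu i hi], h4⟩

theorem Ch.refl {C : Config} {y : ℤ → C.V} {a b : ℤ} (h : Ch C y a b) :
    Ch C (fun i => y (-i)) (-b) (-a) := by
  constructor
  · intro i hi hi'
    have := h.1 (-i - 1) (by omega) (by omega)
    rw [show -i - 1 + 1 = -i by ring] at this
    show C.graph.Adj (y (-i)) (y (-(i + 1)))
    rw [show -(i + 1) = -i - 1 by ring]
    exact this.symm
  · intro i hi hi'
    have := h.2 (-i - 2) (by omega) (by omega)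
    rw [show -i - 2 + 2 = -i by ring] at this
    show (y (-i)) ≠ (y (-(i + 2)))
    rw [show -(i + 2) = -i - 2 by ring]
    exact this.symm

theorem Ch.extend {C : Config} (hac : C.graph.IsAcyclic) (y : ℤ → C.V) (a b : ℤ) (hab : a < b)
    (h : Ch C y a b) :
    ∃ y' a' b', a' ≤ a ∧ b ≤ b' ∧ Ch C y' a' b' ∧ (∀ i, a ≤ i → i ≤ b → y' i = y i) ∧
      C.deg (y' a') ≤ 1 ∧ C.deg (y' b') ≤ 1 := by
  obtain ⟨y1, a1, h1, h2, h3, h4⟩ := Ch.extR hac (Fintype.card C.V) _ _ _ (by omega) h.refl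
    (by omega)
  obtain ⟨y2, b2, g1, g2, g3, g4⟩ := Ch.extR hac (Fintype.card C.V) _ _ _ (by omega) h2.refl
    (by omega)
  rw [neg_neg] at *
  refine ⟨y2, -a1, b2, by omega, g1, g2, ?_, ?_, g4⟩
  · intro i hi hi'
    rw [g3 i hi', h3 (-i) (by omega), neg_neg]
  · rw [g3 _ (by omega), neg_neg]; exact h4

theorem ch_of_chain {C : Config} {m : ℕ} {v : ℕ → C.V} (h : C.IsChain m v) :
    Ch C (fun i => v i.toNat) 0 m := by
  constructor
  · intro i hi hi'
    have := h.2 i.toNat (by omega)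
    show C.graph.Adj (v i.toNat) (v (i + 1).toNat)
    rwa [show (i + 1).toNat = i.toNat + 1 by omega]
  · intro i hi hi' he
    have := h.1 i.toNat (by omega) (i + 2).toNat (by omega) he
    omega

theorem Ch.fwd {C : Config} {y : ℤ → C.V} {a b : ℤ} (h : Ch C y a b)
    (hac : C.graph.IsAcyclic) (s : ℤ) (n : ℕ) (hs : a ≤ s) (hn : s + n ≤ b) :
    C.IsChain n (fun i => y (s + i)) := by
  constructor
  · intro i hi j hj he
    have := h.inj hac _ _ (by omega) (by omega) (by omega) (by omega) he
    omega
  · intro i hi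
    rw [h.adj hac _ _ (by omega) (by omega) (by omega) (by push_cast; omega)]
    left; push_cast; ring

theorem Ch.bwd {C : Config} {y : ℤ → C.V} {a b : ℤ} (h : Ch C y a b)
    (hac : C.graph.IsAcyclic) (s : ℤ) (n : ℕ) (hs : a ≤ s - n) (hn : s ≤ b) :
    C.IsChain n (fun i => y (s - i)) := by
  constructor
  · intro i hi j hj he
    have := h.inj hac _ _ (by omega) (by omega) (by omega) (by omega) he
    omega
  · intro i hi
    rw [h.adj hac _ _ (by omega) (by omega) (by push_cast; omega) (by push_cast; omega)]
    right; push_cast; ring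

theorem nbr_unique {C : Config} (hd : ∀ v : C.V, C.deg v ≤ 2) {x p q r : C.V}
    (hp : C.graph.Adj x p) (hq : C.graph.Adj x q) (hr : C.graph.Adj x r) (hpq : p ≠ q) :
    r = p ∨ r = q := by
  by_contra hc
  push Not at hc
  have := hd x
  have h2 : 2 < (C.graph.neighborSet x).ncard :=
    (Set.two_lt_ncard_iff).2 ⟨p, q, r, hp, hq, hr, hpq, hc.1.symm, hc.2.symm⟩
  unfold Config.deg at this
  omega

theorem deg_two {C : Config} (hd : ∀ v : C.V, C.deg v ≤ 2) {x p q : C.V}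
    (hp : C.graph.Adj x p) (hq : C.graph.Adj x q) (hpq : p ≠ q) : C.deg x = 2 := by
  have := hd x
  have h2 : 1 < (C.graph.neighborSet x).ncard :=
    (Set.one_lt_ncard_iff).2 ⟨p, q, hp, hq, hpq⟩
  unfold Config.deg at *
  omega

theorem deg_pos {C : Config} {x p : C.V} (hp : C.graph.Adj x p) : 1 ≤ C.deg x := by
  have : 0 < (C.graph.neighborSet x).ncard := (Set.ncard_pos).2 ⟨p, hp⟩
  exact this

theorem bad_patterns_fact : ∀ p ∈ badPatterns,
    3 ≤ p.length ∧ ∀ i : Fin p.length, (p.get i).1 = 0 → (p.get i).2 = true := by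
  decide

theorem not_bad_of_adj {C : Config} (hd : ∀ v : C.V, C.deg v ≤ 2) {x z : C.V}
    (hxz : C.graph.Adj x z) (hz : C.adjw z = 0) : ¬ C.IsBad x := by
  rintro ⟨u, v, huv, hu, hv, pu, pv⟩
  rcases nbr_unique hd hu hv hxz huv with h | h
  · subst h; omega
  · subst h; omega

theorem adjw_nonneg {C : Config} (hd : ∀ v : C.V, C.deg v ≤ 2) (hw : ∀ v : C.V, 2 ≤ C.w v)
    (x : C.V) : 0 ≤ C.adjw x := by
  unfold Config.adjw
  have := hd x
  have := hw x
  omega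

theorem ebp_facts {C : Config} (hlin : C.IsLinear) (hwc : C.WorkingConditions)
    (hbad : ∃ x : C.V, C.IsBad x) (m : ℕ) (vc : ℕ → C.V) (hebp : C.IsExtBadPart m vc)
    (hleaf : ¬ C.IsLeaf (vc 0)) :
    5 ≤ m ∧ C.adjw (vc 1) = 0 ∧ C.adjw (vc 2) = 0 ∧ 1 ≤ C.adjw (vc 3) ∧
      ∀ x, C.IsBad x → ∃ j, 3 ≤ j ∧ j ≤ m ∧ vc j = x := by
  obtain ⟨hd, hac⟩ := hlin
  obtain ⟨⟨hch, hcont, hl, hr⟩, hmin⟩ := hebp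
  obtain ⟨hm2, z1, z2⟩ := hl.resolve_left hleaf
  have a12 : C.graph.Adj (vc 1) (vc 2) := hch.2 1 (by omega)
  have a01 : C.graph.Adj (vc 0) (vc 1) := hch.2 0 (by omega)
  have nb1 : ¬ C.IsBad (vc 1) := not_bad_of_adj hd a12 z2
  have nb2 : ¬ C.IsBad (vc 2) := not_bad_of_adj hd a12.symm z1
  have hC := ch_of_chain hch
  have main : ∀ p ∈ badPatterns, ∀ mb vb, C.IsBadPartChain p mb vb → 2 ≤ mb ∧
      ∀ i ≤ mb, ∃ j, 3 ≤ j ∧ j ≤ m ∧ vc j = vb i := by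
    intro p hp mb vb hb
    have hin := hcont p hp mb vb hb
    obtain ⟨hbch, hlen, hadj, hbd⟩ := hb
    obtain ⟨hl3, hz⟩ := bad_patterns_fact p hp
    have key : ∀ i ≤ mb, vb i ≠ vc 1 ∧ vb i ≠ vc 2 := by
      intro i hi
      have hq : C.adjw (vb i) = 0 → C.IsBad (vb i) := by
        intro h0
        have h1 := hadj ⟨i, by omega⟩
        exact (hbd _).2 ⟨⟨i, by omega⟩, hz _ (by rw [← h1]; exact h0), rfl⟩
      constructor
      · intro he
        rw [he] at hq; exact nb1 (hq z1)
      · intro he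
        rw [he] at hq; exact nb2 (hq z2)
    have key0 : ∀ i ≤ mb, ∀ k ≤ mb, C.graph.Adj (vb i) (vb k) → vb i ≠ vc 0 := by
      intro i hi k hk had he
      obtain ⟨j, hj, hje⟩ := hin k hk
      rw [he, ← hje] at had
      have := (hC.adj hac 0 (j : ℤ) (by omega) (by omega) (by omega) (by omega)).1
        (by simpa using had)
      have hj1 : j = 1 := by omega
      subst hj1
      exact (key k hk).1 hje.symm
    refine ⟨by omega, fun i hi => ?_⟩
    obtain ⟨j, hj, hje⟩ := hin i hi
    refine ⟨j, ?_, hj, hje⟩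
    by_contra hc
    have hcases : j = 0 ∨ j = 1 ∨ j = 2 := by omega
    rcases hcases with rfl | rfl | rfl
    · by_cases hlt : i < mb
      · exact key0 i hi (i + 1) (by omega) (hbch.2 i hlt) hje.symm
      · have := hbch.2 (i - 1) (by omega)
        rw [show i - 1 + 1 = i by omega] at this
        exact key0 i hi (i - 1) (by omega) this.symm hje.symm
    · exact (key i hi).1 hje.symm
    · exact (key i hi).2 hje.symm
  obtain ⟨p, hp, mb, vb, hb⟩ := hwc.2.2.2.2.2.2.2 hbad
  obtain ⟨hmb, hmain⟩ := main p hp mb vb hb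
  have hm5 : 5 ≤ m := by
    obtain ⟨j0, h01, h02, h03⟩ := hmain 0 (by omega)
    obtain ⟨j1, h11, h12, h13⟩ := hmain 1 (by omega)
    obtain ⟨j2, h21, h22, h23⟩ := hmain 2 (by omega)
    have e01 : j0 ≠ j1 := by
      rintro rfl
      have := hb.1.1 0 (by omega) 1 (by omega) (by rw [← h03, h13])
      omega
    have e02 : j0 ≠ j2 := by
      rintro rfl
      have := hb.1.1 0 (by omega) 2 (by omega) (by rw [← h03, h23])
      omega
    have e12 : j1 ≠ j2 := by
      rintro rfl
      have := hb.1.1 1 (by omega) 2 (by omega) (by rw [← h13, h23])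
      omega
    omega
  refine ⟨hm5, z1, z2, ?_, ?_⟩
  · by_contra hc
    have z3 : C.adjw (vc 3) = 0 := by
      have := adjw_nonneg hd hwc.1 (vc 3)
      omega
    have := hmin (m - 1) (fun i => vc (i + 1)) ⟨⟨?_, ?_⟩, ?_, Or.inr ⟨by omega, z2, z3⟩, ?_⟩
    · omega
    · intro i hi j hj he
      have := hch.1 (i + 1) (by omega) (j + 1) (by omega) he
      omega
    · intro i hi
      exact hch.2 (i + 1) (by omega)
    · intro p' hp' mb' vb' hb' i hi
      obtain ⟨j, j1, j2, j3⟩ := (main p' hp' mb' vb' hb').2 i hi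
      refine ⟨j - 1, by omega, ?_⟩
      show vc (j - 1 + 1) = vb' i
      rw [show j - 1 + 1 = j by omega]; exact j3
    · show C.IsLeaf (vc (m - 1 + 1)) ∨ 2 ≤ m - 1 ∧ C.adjw (vc (m - 1 - 1 + 1)) = 0 ∧
        C.adjw (vc (m - 1 - 2 + 1)) = 0
      rw [show m - 1 + 1 = m by omega, show m - 1 - 1 + 1 = m - 1 by omega,
        show m - 1 - 2 + 1 = m - 2 by omega]
      exact hr.imp_right fun h => ⟨by omega, h.2⟩
  · intro x hx
    obtain ⟨i, _, hi⟩ := (hb.2.2.2 x).1 hx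
    obtain ⟨j, j1, j2, j3⟩ := hmain i (by have := i.2; have := hb.2.1; omega)
    exact ⟨j, j1, j2, by rw [j3, hi]⟩

theorem Ch.no_fwd {C : Config} {y : ℤ → C.V} {a b : ℤ} (h : Ch C y a b)
    (hac : C.graph.IsAcyclic) (p : List ℤ) (hp : ¬ C.HasPattern p) (s : ℤ) (n : ℕ)
    (hn : n + 1 = p.length) (hs : a ≤ s) (hb : s + n ≤ b)
    (hv : ∀ i : Fin p.length, C.adjw (y (s + (i : ℕ))) = p.get i) : False :=
  hp ⟨n, _, h.fwd hac s n hs hb, hn, hv⟩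

theorem Ch.no_bwd {C : Config} {y : ℤ → C.V} {a b : ℤ} (h : Ch C y a b)
    (hac : C.graph.IsAcyclic) (p : List ℤ) (hp : ¬ C.HasPattern p) (s : ℤ) (n : ℕ)
    (hn : n + 1 = p.length) (hs : a ≤ s - n) (hb : s ≤ b)
    (hv : ∀ i : Fin p.length, C.adjw (y (s - (i : ℕ))) = p.get i) : False :=
  hp ⟨n, _, h.bwd hac s n hs hb, hn, hv⟩

theorem setup {C : Config} (hlin : C.IsLinear) (hwc : C.WorkingConditions)
    (hbad : ∃ x : C.V, C.IsBad x) (m : ℕ) (vc : ℕ → C.V) (hebp : C.IsExtBadPart m vc)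
    (hleaf : ¬ C.IsLeaf (vc 0)) :
    ∃ (y : ℤ → C.V) (a b : ℤ), Ch C y a b ∧ a ≤ -1 ∧ 5 ≤ b ∧
      (∀ i : ℕ, i ≤ 5 → y i = vc i) ∧
      C.adjw (y 1) = 0 ∧ C.adjw (y 2) = 0 ∧ 1 ≤ C.adjw (y 3) ∧
      (∀ i, a < i → i < b → C.deg (y i) = 2) ∧
      ∀ α β c : ℤ, (∀ p4 p3 p2 p1 q0 q3 q4 q5 : ℤ, (a ≤ -4 ∨ p4 = 0) → (a ≤ -3 ∨ p3 = 0) →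
        (a ≤ -2 ∨ p2 = 0) →
        (q0 * (β - 1) + q3 * α + q4 * c) ^ 2 + (q0 * β + q3 * α + q4 * c) ^ 2
          + (q0 * β + q3 * (α + 1) + q4 * c) ^ 2 ≤
        p4 ^ 2 * C.w (y (-4)) + p3 ^ 2 * C.w (y (-3)) + p2 ^ 2 * C.w (y (-2))
          + p1 ^ 2 * C.w (y (-1)) + q0 ^ 2 * C.w (y 0)
          + q3 ^ 2 * C.w (y 3) + q4 ^ 2 * C.w (y 4) + q5 ^ 2 * C.w (y 5)
          - 2 * (p4 * p3 + p3 * p2 + p2 * p1 + p1 * q0 + q3 * q4 + q4 * q5)) →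
        Core a b (fun i => C.adjw (y i)) (fun i => C.w (y i)) α β c := by
  obtain ⟨hm5, z1, z2, z3, hbd⟩ := ebp_facts hlin hwc hbad m vc hebp hleaf
  obtain ⟨hd, hac⟩ := hlin
  have hC := ch_of_chain hebp.1.1
  obtain ⟨y, a, b, ha, hb, h, hy, da, db⟩ := Ch.extend hac _ _ _ (by omega) hC
  have hyv : ∀ i : ℕ, i ≤ m → y i = vc i := by
    intro i hi
    rw [hy i (by omega) (by omega)]
    simp
  have y0 : y 0 = vc 0 := by simpa using hyv 0 (by omega)
  have y1 : y 1 = vc 1 := by simpa using hyv 1 (by omega)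
  have y2 : y 2 = vc 2 := by simpa using hyv 2 (by omega)
  have y3 : y 3 = vc 3 := by simpa using hyv 3 (by omega)
  have ha1 : a ≤ -1 := by
    by_contra hc
    have : a = 0 := by omega
    subst this
    rw [y0] at da
    exact hleaf da
  have hdeg : ∀ i, a < i → i < b → C.deg (y i) = 2 := by
    intro i hi hi'
    refine deg_two hd (p := y (i - 1)) (q := y (i + 1)) ?_ ?_ ?_
    · rw [h.adj hac _ _ (by omega) (by omega) (by omega) (by omega)]; omega
    · rw [h.adj hac _ _ (by omega) (by omega) (by omega) (by omega)]; omega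
    · intro he
      have := h.inj hac _ _ (by omega) (by omega) (by omega) (by omega) he
      omega
  have dae : C.deg (y a) = 1 := by
    have := deg_pos (h.1 a le_rfl (by omega))
    omega
  have dbe : C.deg (y b) = 1 := by
    have := h.1 (b - 1) (by omega) (by omega)
    rw [sub_add_cancel] at this
    have := deg_pos this.symm
    omega
  rw [← y1] at z1
  rw [← y2] at z2
  rw [← y3] at z3
  have nb : ∀ i, a < i → i ≤ 2 → 0 < C.adjw (y (i - 1)) → 0 < C.adjw (y (i + 1)) → False := by
    intro i hi hi2 u1 u2
    obtain ⟨j, j1, j2, j3⟩ := hbd (y i) ⟨y (i - 1), y (i + 1), by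
        intro he
        have := h.inj hac _ _ (by omega) (by omega) (by omega) (by omega) he
        omega, by
        rw [h.adj hac _ _ (by omega) (by omega) (by omega) (by omega)]; omega, by
        rw [h.adj hac _ _ (by omega) (by omega) (by omega) (by omega)]; omega, u1, u2⟩
    rw [← hyv j j2] at j3
    have := h.inj hac _ _ (by omega) (by omega) (by omega) (by omega) j3
    omega
  obtain ⟨c1, c2, c3, c4, c5, c6, c7, c8⟩ := hwc
  refine ⟨y, a, b, h, ha1, by omega, fun i hi => hyv i (by omega), z1, z2, z3, hdeg, ?_⟩
  intro α β c key
  have F1 := c7 [1, 0, 0, 2] (by decide)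
  have F2 := c7 [1, 0, 0, 3] (by decide)
  have F3 := c7 [1, 0, 0, 0, 3] (by decide)
  have F4 := c7 [1, 1, 0, 0, 1, 2] (by decide)
  have F5 := c7 [3, 1, 0, 0, 1] (by decide)
  have dw : ∀ x, C.w x = C.adjw x + C.deg x := by
    intro x; unfold Config.adjw; ring
  refine
    { ha := ha1, hb := by omega, hw2 := fun i _ _ => c1 _, hW3 := fun i _ _ => c2 _,
      hint := fun i hi hi' => by rw [dw, hdeg i hi hi']; rfl
      hea := by rw [dw, dae]; rfl
      heb := by rw [dw, dbe]; rfl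
      huniq := fun i j hi hi' hj hj' u v => h.inj hac i j hi hi' hj hj' (c3 _ _ u v)
      h4 := fun k i _ _ hk hi hi' u v => c5 ⟨_, hk⟩ _ _ (h.1 i hi (by omega)) u v
      hp3 := z3
      nb1 := fun hh u v => nb (-1) (by omega) (by omega) (by simpa using u) (by simpa using v)
      nb2 := fun hh u v => nb (-2) (by omega) (by omega) (by simpa using u) (by simpa using v)
      key := key
      f1 := ?_, f2 := ?_, f3 := ?_, f4 := ?_, f5 := ?_, f6 := ?_, f7 := ?_, f8 := ?_, f9 := ?_ }
  · intro g1 g2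
    refine h.no_fwd hac _ F1 0 3 rfl (by omega) (by omega) fun i => ?_
    fin_cases i <;> simp [g1, g2, z1, z2]
  · intro g1 g2
    refine h.no_fwd hac _ F2 0 3 rfl (by omega) (by omega) fun i => ?_
    fin_cases i <;> simp [g1, g2, z1, z2]
  · intro g1 g2
    refine h.no_bwd hac _ F1 3 3 rfl (by omega) (by omega) fun i => ?_
    fin_cases i <;> simp [g1, g2, z1, z2]
  · intro g1 g2
    refine h.no_bwd hac _ F2 3 3 rfl (by omega) (by omega) fun i => ?_
    fin_cases i <;> simp [g1, g2, z1, z2]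
  · intro g1 g2 g3
    refine h.no_fwd hac _ F3 (-1) 4 rfl (by omega) (by omega) fun i => ?_
    fin_cases i <;> simp [g1, g2, g3, z1, z2]
  · intro g1 g2 g3 g4
    refine h.no_fwd hac _ F4 (-1) 5 rfl (by omega) (by omega) fun i => ?_
    fin_cases i <;> simp [g1, g2, g3, g4, z1, z2]
  · intro g1 g2 g3 g4
    refine h.no_bwd hac _ F4 4 5 rfl (by omega) (by omega) fun i => ?_
    fin_cases i <;> simp [g1, g2, g3, g4, z1, z2]
  · intro g1 g2 g3
    refine h.no_bwd hac _ F5 4 4 rfl (by omega) (by omega) fun i => ?_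
    fin_cases i <;> simp [g1, g2, g3, z1, z2]
  · intro g1 g2 g3
    refine h.no_fwd hac _ F5 (-1) 4 rfl (by omega) (by omega) fun i => ?_
    fin_cases i <;> simp [g1, g2, g3, z1, z2]

theorem small_of_sq {x : ℤ} (h : x ^ 2 ≤ 3) : -1 ≤ x ∧ x ≤ 1 := by
  constructor <;> nlinarith

theorem card_two {N : ℕ} (u : Fin N → ℤ) (p q : Fin N) (d f : ℤ) (hpq : p ≠ q) (hd : d ≠ 0)
    (hf : f ≠ 0) (hp : u p ≠ 0) (hq : u q ≠ 0) :
    (supp u ∩ supp (Pi.single p d + Pi.single q f)).card = 2 := by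
  have : supp u ∩ supp (Pi.single p d + Pi.single q f) = {p, q} := by
    ext i
    simp only [supp, Finset.mem_inter, Finset.mem_filter, Finset.mem_univ, true_and,
      Finset.mem_insert, Finset.mem_singleton, Pi.add_apply, Pi.single_apply]
    by_cases h1 : i = p
    · subst h1; simp [hpq, hd, hp]
    · by_cases h2 : i = q
      · subst h2; simp [h1, hf, hq]
      · simp [h1, h2]
  rw [this, Finset.card_pair hpq]

theorem card_three {N : ℕ} (u : Fin N → ℤ) (p q r : Fin N) (d f g : ℤ) (hpq : p ≠ q)
    (hpr : p ≠ r) (hqr : q ≠ r) (hd : d ≠ 0)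
    (hf : f ≠ 0) (hp : u p ≠ 0) (hq : u q ≠ 0) (hr : u r = 0) :
    (supp u ∩ supp (Pi.single p d + (Pi.single q f + Pi.single r g))).card = 2 := by
  have : supp u ∩ supp (Pi.single p d + (Pi.single q f + Pi.single r g)) = {p, q} := by
    ext i
    simp only [supp, Finset.mem_inter, Finset.mem_filter, Finset.mem_univ, true_and,
      Finset.mem_insert, Finset.mem_singleton, Pi.add_apply, Pi.single_apply]
    by_cases h1 : i = p
    · subst h1; simp [hpq, hpr, hd, hp]
    · by_cases h2 : i = q
      · subst h2; simp [h1, hqr, hf, hq]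
      · by_cases h3 : i = r
        · subst h3; simp [h1, h2, hr]
        · simp [h1, h2, h3]
  rw [this, Finset.card_pair hpq]

theorem dot_comm {N : ℕ} (x y : Fin N → ℤ) : dot x y = dot y x := by
  rw [dot_eq, dot_eq, dotProduct_comm]

theorem dot_two {N : ℕ} (x : Fin N → ℤ) (i j : Fin N) (d f : ℤ) :
    dot x (Pi.single i d + Pi.single j f) = x i * d + x j * f := by
  rw [dot_eq, dotProduct_add, dotProduct_single, dotProduct_single]

/-- Signed coordinates in a frame satisfy the Bessel inequality. -/
theorem bess3 {N : ℕ} (x : Fin N → ℤ) (i1 i2 i3 : Fin N) (d1 d2 d3 : ℤ) (h12 : i1 ≠ i2)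
    (h13 : i1 ≠ i3) (h23 : i2 ≠ i3) (e1 : d1 ^ 2 = 1) (e2 : d2 ^ 2 = 1) (e3 : d3 ^ 2 = 1) :
    (x i1 * d1) ^ 2 + (x i2 * d2) ^ 2 + (x i3 * d3) ^ 2 ≤ dot x x := by
  have h := bessel x {i1, i2, i3}
  rw [Finset.sum_insert (by simp [h12, h13]), Finset.sum_pair h23] at h
  rw [mul_pow, mul_pow, mul_pow, e1, e2, e3]
  linarith

theorem good_vertex {N : ℕ} (P u : Fin N → ℤ) (i1 i2 i3 : Fin N) (d1 d2 d3 : ℤ) (h12 : i1 ≠ i2)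
    (h13 : i1 ≠ i3) (h23 : i2 ≠ i3) (e1 : d1 ^ 2 = 1) (e2 : d2 ^ 2 = 1) (e3 : d3 ^ 2 = 1)
    (α c : ℤ) (hα : α = 0 ∨ α = -1) (hc : c ≠ 0)
    (P1 : P i1 * d1 = α) (P2 : P i2 * d2 = α) (P3 : P i3 * d3 = α + 1)
    (u1 : u i1 * d1 = c) (u2 : u i2 * d2 = c) (u3 : u i3 * d3 = c)
    (hPu : dot P u = 0) (hu5 : dot u u ≤ 5) (hP5 : dot P P ≤ 5)
    (h4 : 4 ≤ dot u u → dot P P = 3) :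
    4 ≤ dot u u ∧ (supp u ∩ supp (Pi.single i1 d1 + Pi.single i2 (-d2))).card = 2 ∧
      (supp u ∩ supp (Pi.single i2 d2 + Pi.single i3 (-d3))).card = 2 ∧
      (supp u ∩ supp P).card = 2 := by
  have hb : ∀ q3 q : ℤ, 2 * (q3 * α + q * c) ^ 2 + (q3 * (α + 1) + q * c) ^ 2 ≤
      q3 ^ 2 * dot P P + q ^ 2 * dot u u := by
    intro q3 q
    have h := bess3 (q3 • P + q • u) i1 i2 i3 d1 d2 d3 h12 h13 h23 e1 e2 e3
    have hx : dot (q3 • P + q • u) (q3 • P + q • u) = q3 ^ 2 * dot P P + q ^ 2 * dot u u := by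
      have hPu' := hPu
      rw [dot_eq] at hPu
      have hPu' : u ⬝ᵥ P = 0 := by rw [dotProduct_comm]; exact hPu
      simp only [dot_eq, add_dotProduct, dotProduct_add, smul_dotProduct, dotProduct_smul, hPu,
        hPu', smul_eq_mul]
      ring
    rw [hx] at h
    simp only [Pi.add_apply, Pi.smul_apply, smul_eq_mul, add_mul, mul_assoc, P1, P2, P3, u1, u2,
      u3] at h
    linarith
  have hb0 := hb 0 1
  have cc : c = 1 ∨ c = -1 := by
    have : c ≤ 1 := by nlinarith
    have : -1 ≤ c := by nlinarith
    omega
  have hsq : c ^ 2 = 1 := by rcases cc with rfl | rfl <;> norm_num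
  have hu3 : 3 ≤ dot u u := by nlinarith
  have hα0 : α = 0 := by
    rcases hα with h | h
    · exact h
    · exfalso
      subst h
      have := hb 1 (-c)
      rcases eq_or_lt_of_le hu3 with h3 | h3
      · nlinarith
      · have := h4 h3; nlinarith
  subst hα0
  have hu4 : 4 ≤ dot u u := by
    by_contra hcon
    have h3 : dot u u = 3 := by omega
    have := hb 1 (3 * c)
    nlinarith
  have hP := h4 hu4
  have d10 : d1 ≠ 0 := by rintro rfl; simp at e1
  have d20 : d2 ≠ 0 := by rintro rfl; simp at e2
  have d30 : d3 ≠ 0 := by rintro rfl; simp at e3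
  have p1 : P i1 = 0 := by simpa [d10] using P1
  have p2 : P i2 = 0 := by simpa [d20] using P2
  have p3 : P i3 = d3 := by
    rcases sq_one e3 with h | h <;> rw [h] at P3 ⊢ <;> omega
  have n1 : u i1 ≠ 0 := by rintro h; rw [h] at u1; simp at u1; exact hc u1.symm
  have n2 : u i2 ≠ 0 := by rintro h; rw [h] at u2; simp at u2; exact hc u2.symm
  have n3 : u i3 ≠ 0 := by rintro h; rw [h] at u3; simp at u3; exact hc u3.symm
  refine ⟨hu4, card_two u i1 i2 d1 (-d2) h12 d10 (by simpa using d20) n1 n2,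
    card_two u i2 i3 d2 (-d3) h23 d20 (by simpa using d30) n2 n3, ?_⟩
  obtain ⟨H, H1, H2, H3, H4⟩ := peel P i3
  rw [p3] at H1 H4
  obtain ⟨j, k, f, g, hjk, hf, hg, rfl⟩ := norm_two H (by rw [H4, hP, e3]; norm_num)
  have f0 : f ≠ 0 := by rintro rfl; simp at hf
  have g0 : g ≠ 0 := by rintro rfl; simp at hg
  have nz : ∀ i, (Pi.single j f + Pi.single k g : Fin N → ℤ) i = 0 → i ≠ j ∧ i ≠ k := by
    intro i hi
    constructor
    · rintro rfl
      simp [hjk, f0] at hi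
    · rintro rfl
      simp [hjk.symm, g0] at hi
  obtain ⟨a1, a2⟩ := nz i1 (by rw [H3 i1 h13, p1])
  obtain ⟨b1, b2⟩ := nz i2 (by rw [H3 i2 h23, p2])
  obtain ⟨c1, c2⟩ := nz i3 H2
  have hdot : u i3 * d3 + (u j * f + u k * g) = 0 := by
    rw [← hPu, dot_comm, H1, dot_eq, dotProduct_add, ← dot_eq, ← dot_eq, dot_single, dot_two]
  rw [u3] at hdot
  have hbes := bessel u {i1, i2, i3, j, k}
  rw [Finset.sum_insert (by simp [h12, h13, a1, a2]), Finset.sum_insert (by simp [h23, b1, b2]),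
    Finset.sum_insert (by simp [c1, c2]), Finset.sum_pair hjk] at hbes
  have s1 : u i1 ^ 2 = 1 := by rw [← hsq, ← u1, mul_pow, e1, mul_one]
  have s2 : u i2 ^ 2 = 1 := by rw [← hsq, ← u2, mul_pow, e2, mul_one]
  have s3 : u i3 ^ 2 = 1 := by rw [← hsq, ← u3, mul_pow, e3, mul_one]
  rw [s1, s2, s3] at hbes
  obtain ⟨l1, l2⟩ := small_of_sq (x := u j) (by have := sq_nonneg (u k); linarith)
  obtain ⟨l3, l4⟩ := small_of_sq (x := u k) (by have := sq_nonneg (u j); linarith)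
  have hcase : (u j ≠ 0 ∧ u k = 0) ∨ (u k ≠ 0 ∧ u j = 0) := by
    rcases cc with rfl | rfl <;> rcases sq_one hf with rfl | rfl <;>
      rcases sq_one hg with rfl | rfl <;> omega
  rw [H1]
  rcases hcase with ⟨x1, x2⟩ | ⟨x1, x2⟩
  · exact card_three u i3 j k d3 f g c1 c2 hjk d30 f0 n3 x1 x2
  · rw [add_comm (Pi.single j f : Fin N → ℤ)]
    exact card_three u i3 k j d3 g f c2 c1 hjk.symm d30 g0 n3 x1 x2

theorem quad {N : ℕ} (P : ℤ → Fin N → ℤ) (w r : ℤ → ℤ) (S : Finset ℤ)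
    (hd : ∀ i ∈ S, ∀ j ∈ S, r i = 0 ∨ r j = 0 ∨
      dot (P i) (P j) = if i = j then w i else if j = i + 1 ∨ i = j + 1 then -1 else 0) :
    dot (∑ i ∈ S, r i • P i) (∑ j ∈ S, r j • P j) = ∑ i ∈ S, ∑ j ∈ S, r i * r j *
      (if i = j then w i else if j = i + 1 ∨ i = j + 1 then -1 else 0) := by
  rw [dot_eq, sum_dotProduct]
  refine Finset.sum_congr rfl fun i hi => ?_
  rw [dotProduct_sum]
  refine Finset.sum_congr rfl fun j hj => ?_
  rw [smul_dotProduct, dotProduct_smul, ← dot_eq, smul_eq_mul, smul_eq_mul, ← mul_assoc]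
  rcases hd i hi j hj with h | h | h
  · simp [h]
  · simp [h]
  · rw [h]

theorem quad_key {N : ℕ} (P : ℤ → Fin N → ℤ) (w : ℤ → ℤ) (a : ℤ) (ha : a ≤ -1)
    (hd : ∀ i j, a ≤ i → i ≤ 5 → a ≤ j → j ≤ 5 →
      dot (P i) (P j) = if i = j then w i else if j = i + 1 ∨ i = j + 1 then -1 else 0)
    (i1 i2 i3 : Fin N) (d1 d2 d3 : ℤ) (h12 : i1 ≠ i2)
    (h13 : i1 ≠ i3) (h23 : i2 ≠ i3) (e1 : d1 ^ 2 = 1) (e2 : d2 ^ 2 = 1) (e3 : d3 ^ 2 = 1)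
    (α β c : ℤ)
    (hz : ∀ i, a ≤ i → i ≤ -1 ∨ i = 5 → P i i1 * d1 = 0 ∧ P i i2 * d2 = 0 ∧ P i i3 * d3 = 0)
    (h0 : P 0 i1 * d1 = β - 1 ∧ P 0 i2 * d2 = β ∧ P 0 i3 * d3 = β)
    (h3 : P 3 i1 * d1 = α ∧ P 3 i2 * d2 = α ∧ P 3 i3 * d3 = α + 1)
    (h4 : P 4 i1 * d1 = c ∧ P 4 i2 * d2 = c ∧ P 4 i3 * d3 = c)
    (p4 p3 p2 p1 q0 q3 q4 q5 : ℤ) (hp4 : a ≤ -4 ∨ p4 = 0) (hp3 : a ≤ -3 ∨ p3 = 0)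
    (hp2 : a ≤ -2 ∨ p2 = 0) :
    (q0 * (β - 1) + q3 * α + q4 * c) ^ 2 + (q0 * β + q3 * α + q4 * c) ^ 2
      + (q0 * β + q3 * (α + 1) + q4 * c) ^ 2 ≤
    p4 ^ 2 * w (-4) + p3 ^ 2 * w (-3) + p2 ^ 2 * w (-2) + p1 ^ 2 * w (-1) + q0 ^ 2 * w 0
      + q3 ^ 2 * w 3 + q4 ^ 2 * w 4 + q5 ^ 2 * w 5
      - 2 * (p4 * p3 + p3 * p2 + p2 * p1 + p1 * q0 + q3 * q4 + q4 * q5) := by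
  obtain ⟨r, hr⟩ : ∃ r : ℤ → ℤ, r = fun i => if i = -4 then p4 else if i = -3 then p3 else
    if i = -2 then p2 else if i = -1 then p1 else if i = 0 then q0 else if i = 3 then q3 else
    if i = 4 then q4 else q5 := ⟨_, rfl⟩
  have rm4 : r (-4) = p4 := by simp [hr]
  have rm3 : r (-3) = p3 := by simp [hr]
  have rm2 : r (-2) = p2 := by simp [hr]
  have rm1 : r (-1) = p1 := by simp [hr]
  have r0 : r 0 = q0 := by simp [hr]
  have r3 : r 3 = q3 := by simp [hr]
  have r4 : r 4 = q4 := by simp [hr]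
  have r5 : r 5 = q5 := by simp [hr]
  clear hr
  obtain ⟨S, hS⟩ : ∃ S : Finset ℤ, S = {-4, -3, -2, -1, 0, 3, 4, 5} := ⟨_, rfl⟩
  have hSr : ∀ i ∈ S, i ≤ 5 ∧ (r i = 0 ∨ a ≤ i) := by
    intro i hi
    rw [hS] at hi
    simp only [Finset.mem_insert, Finset.mem_singleton] at hi
    rcases hi with rfl | rfl | rfl | rfl | rfl | rfl | rfl | rfl
    · exact ⟨by omega, by omega⟩
    · exact ⟨by omega, by omega⟩
    · exact ⟨by omega, by omega⟩
    all_goals exact ⟨by omega, Or.inr (by omega)⟩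
  have hsum : ∀ f : ℤ → ℤ, ∑ i ∈ S, f i =
      f (-4) + f (-3) + f (-2) + f (-1) + f 0 + f 3 + f 4 + f 5 := by
    intro f
    rw [hS]
    repeat rw [Finset.sum_insert (by decide)]
    rw [Finset.sum_singleton]
    ring
  have hq := quad P w r S (by
    intro i hi j hj
    rcases (hSr i hi).2 with h | h
    · exact Or.inl h
    · rcases (hSr j hj).2 with h' | h'
      · exact Or.inr (Or.inl h')
      · exact Or.inr (Or.inr (hd i j h (hSr i hi).1 h' (hSr j hj).1)))
  have hb := bess3 (∑ i ∈ S, r i • P i) i1 i2 i3 d1 d2 d3 h12 h13 h23 e1 e2 e3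
  rw [hq] at hb
  have hco : ∀ (k : Fin N) (d : ℤ), (∑ i ∈ S, r i • P i) k * d = ∑ i ∈ S, r i * (P i k * d) := by
    intro k d
    rw [Finset.sum_apply, Finset.sum_mul]
    refine Finset.sum_congr rfl fun i _ => ?_
    simp [mul_assoc]
  simp only [hco, hsum, rm4, rm3, rm2, rm1, r0, r3, r4, r5, h0.1, h0.2.1, h0.2.2, h3.1, h3.2.1,
    h3.2.2, h4.1, h4.2.1, h4.2.2] at hb
  have zz : ∀ (i p : ℤ), i ≤ -1 ∨ i = 5 → (a ≤ i ∨ p = 0) → p * (P i i1 * d1) = 0 ∧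
      p * (P i i2 * d2) = 0 ∧ p * (P i i3 * d3) = 0 := by
    intro i p hi hp
    rcases hp with hp | hp
    · obtain ⟨x1, x2, x3⟩ := hz i hp hi
      rw [x1, x2, x3]; simp
    · simp [hp]
  obtain ⟨a1, a2, a3⟩ := zz (-4) p4 (by omega) hp4
  obtain ⟨b1, b2, b3⟩ := zz (-3) p3 (by omega) hp3
  obtain ⟨c1, c2, c3⟩ := zz (-2) p2 (by omega) hp2
  obtain ⟨f1, f2, f3⟩ := zz (-1) p1 (by omega) (by omega)
  obtain ⟨g1, g2, g3⟩ := zz 5 q5 (by omega) (by omega)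
  rw [a1, a2, a3, b1, b2, b3, c1, c2, c3, f1, f2, f3, g1, g2, g3] at hb
  norm_num at hb
  linarith

/-- Lemma 5.2: an unclean screw forces a vertex of weight at least `4` whose support
meets those of `v₁`, `v₂` and `v₃` in exactly two basis vectors each. -/
theorem statement3 (C : Config) (hlin : C.IsLinear) (hwc : C.WorkingConditions)
    (hbad : ∃ x : C.V, C.IsBad x) (N : ℕ) (φ : C.V → Fin N → ℤ)
    (hφ : C.IsEmbedding N φ) (m : ℕ) (vc : ℕ → C.V) (hebp : C.IsExtBadPart m vc)
    (hleaf : ¬ C.IsLeaf (vc 0)) (e : Fin N)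
    (he2 : φ (vc 2) e ≠ 0) (he3 : φ (vc 3) e ≠ 0)
    (hnotclean : ¬ ∀ u : C.V, u ≠ vc 2 → u ≠ vc 3 → φ u e = 0) :
    ∃ x : C.V, 4 ≤ C.w x ∧
      (supp (φ x) ∩ supp (φ (vc 1))).card = 2 ∧
      (supp (φ x) ∩ supp (φ (vc 2))).card = 2 ∧
      (supp (φ x) ∩ supp (φ (vc 3))).card = 2 := by
  by_contra hno
  obtain ⟨y, a, b, h, ha, hb, hy, z1, z2, z3, hdeg, mk⟩ := setup hlin hwc hbad m vc hebp hleaf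
  obtain ⟨hd, hac⟩ := hlin
  obtain ⟨w1, w2, w3, -⟩ := hwc
  have y1 : y 1 = vc 1 := by simpa using hy 1 (by omega)
  have y2 : y 2 = vc 2 := by simpa using hy 2 (by omega)
  have y3 : y 3 = vc 3 := by simpa using hy 3 (by omega)
  rw [← y1, ← y2, ← y3] at hno
  rw [← y2] at he2 hnotclean
  rw [← y3] at he3 hnotclean
  clear hy y1 y2 y3 hebp hleaf
  have dw : ∀ x, C.w x = C.adjw x + C.deg x := by
    intro x; unfold Config.adjw; ring
  have w5 : ∀ x, C.w x ≤ 5 := by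
    intro x
    have := dw x
    have := w2 x
    have := hd x
    omega
  have hdot : ∀ i j, a ≤ i → i ≤ b → a ≤ j → j ≤ b → dot (φ (y i)) (φ (y j)) =
      if i = j then C.w (y i) else if j = i + 1 ∨ i = j + 1 then -1 else 0 := by
    intro i j hi hi' hj hj'
    rw [hφ]
    by_cases hij : i = j
    · subst hij; simp
    · rw [if_neg (fun he => hij (h.inj hac i j hi hi' hj hj' he)), if_neg hij]
      simp only [h.adj hac i j hi hi' hj hj']
  have hself : ∀ x, dot (φ x) (φ x) = C.w x := by
    intro x; rw [hφ]; simp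
  have hw1 : C.w (y 1) = 2 := by rw [dw, z1, hdeg 1 (by omega) (by omega)]; norm_num
  have hw2 : C.w (y 2) = 2 := by rw [dw, z2, hdeg 2 (by omega) (by omega)]; norm_num
  obtain ⟨i1, i2, i3, d1, d2, d3, h12, h13, h23, e1, e2, e3, hv1, hv2⟩ :=
    frame (φ (y 1)) (φ (y 2)) (by rw [hself, hw1]) (by rw [hself, hw2])
      (by rw [hdot 2 1 (by omega) (by omega) (by omega) (by omega)]; norm_num)
  have E1 : ∀ x, dot (φ x) (φ (y 1)) = φ x i1 * d1 - φ x i2 * d2 := by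
    intro x; rw [hv1, dot_two]; ring
  have E2 : ∀ x, dot (φ x) (φ (y 2)) = φ x i2 * d2 - φ x i3 * d3 := by
    intro x; rw [hv2, dot_two]; ring
  have B : ∀ x, (φ x i1 * d1) ^ 2 + (φ x i2 * d2) ^ 2 + (φ x i3 * d3) ^ 2 ≤ 5 := by
    intro x
    have := bess3 (φ x) i1 i2 i3 d1 d2 d3 h12 h13 h23 e1 e2 e3
    rw [hself] at this
    exact this.trans (w5 x)
  have d10 : d1 ≠ 0 := by rintro rfl; simp at e1
  have d20 : d2 ≠ 0 := by rintro rfl; simp at e2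
  have d30 : d3 ≠ 0 := by rintro rfl; simp at e3
  -- the coordinates of `v₃`
  obtain ⟨α, hα⟩ : ∃ α, α = φ (y 3) i2 * d2 := ⟨_, rfl⟩
  have h3 : φ (y 3) i1 * d1 = α ∧ φ (y 3) i2 * d2 = α ∧ φ (y 3) i3 * d3 = α + 1 := by
    have a1 := E1 (y 3)
    have a2 := E2 (y 3)
    rw [hdot 3 1 (by omega) (by omega) (by omega) (by omega)] at a1
    rw [hdot 3 2 (by omega) (by omega) (by omega) (by omega)] at a2
    norm_num at a1 a2
    exact ⟨by linarith, by linarith, by linarith⟩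
  have hα' : α = 0 ∨ α = -1 := by
    have := B (y 3)
    rw [h3.1, h3.2.1, h3.2.2] at this
    have : α < 1 := by nlinarith
    have : -2 < α := by nlinarith
    omega
  -- the coordinates of `v₀`
  obtain ⟨β, hβ⟩ : ∃ β, β = φ (y 0) i2 * d2 := ⟨_, rfl⟩
  have h0 : φ (y 0) i1 * d1 = β - 1 ∧ φ (y 0) i2 * d2 = β ∧ φ (y 0) i3 * d3 = β := by
    have a1 := E1 (y 0)
    have a2 := E2 (y 0)
    rw [hdot 0 1 (by omega) (by omega) (by omega) (by omega)] at a1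
    rw [hdot 0 2 (by omega) (by omega) (by omega) (by omega)] at a2
    norm_num at a1 a2
    exact ⟨by linarith, by linarith, by linarith⟩
  have hβ' : β = 0 ∨ β = 1 := by
    have := B (y 0)
    rw [h0.1, h0.2.1, h0.2.2] at this
    have : β < 2 := by nlinarith
    have : -1 < β := by nlinarith
    omega
  -- the coordinates of `v₄`
  obtain ⟨c, hc⟩ : ∃ c, c = φ (y 4) i2 * d2 := ⟨_, rfl⟩
  have h4 : φ (y 4) i1 * d1 = c ∧ φ (y 4) i2 * d2 = c ∧ φ (y 4) i3 * d3 = c := by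
    have a1 := E1 (y 4)
    have a2 := E2 (y 4)
    rw [hdot 4 1 (by omega) (by omega) (by omega) (by omega)] at a1
    rw [hdot 4 2 (by omega) (by omega) (by omega) (by omega)] at a2
    norm_num at a1 a2
    exact ⟨by linarith, by linarith, by linarith⟩
  have hc' : c = 0 ∨ c = 1 ∨ c = -1 := by
    have := B (y 4)
    rw [h4.1, h4.2.1, h4.2.2] at this
    have := small_of_sq (x := c) (by nlinarith)
    omega
  have adjy : ∀ i, a < i → i < b → ∀ x, C.graph.Adj (y i) x → x = y (i - 1) ∨ x = y (i + 1) := by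
    intro i hi hi' x hx
    refine nbr_unique hd (x := y i) ?_ ?_ hx ?_
    · rw [h.adj hac _ _ (by omega) (by omega) (by omega) (by omega)]; omega
    · rw [h.adj hac _ _ (by omega) (by omega) (by omega) (by omega)]; omega
    · intro he
      have := h.inj hac _ _ (by omega) (by omega) (by omega) (by omega) he
      omega
  -- all remaining vertices avoid the frame
  have other : ∀ x, x ≠ y 0 → x ≠ y 1 → x ≠ y 2 → x ≠ y 3 → ¬ C.graph.Adj x (y 3) →
      φ x i1 * d1 = 0 ∧ φ x i2 * d2 = 0 ∧ φ x i3 * d3 = 0 := by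
    intro x x0 x1 x2 x3 nadj
    have na1 : ¬ C.graph.Adj x (y 1) := by
      intro hh
      rcases adjy 1 (by omega) (by omega) x hh.symm with q | q
      · exact x0 (by simpa using q)
      · exact x2 (by simpa using q)
    have na2 : ¬ C.graph.Adj x (y 2) := by
      intro hh
      rcases adjy 2 (by omega) (by omega) x hh.symm with q | q
      · exact x1 (by simpa using q)
      · exact x3 (by simpa using q)
    have a1 := E1 x
    have a2 := E2 x
    rw [hφ, if_neg x1, if_neg na1] at a1
    rw [hφ, if_neg x2, if_neg na2] at a2
    by_contra hcon
    have hne : φ x i2 * d2 ≠ 0 := by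
      intro hh
      exact hcon ⟨by linarith, hh, by linarith⟩
    have hdw3 := dw (y 3)
    rw [hdeg 3 (by omega) (by omega)] at hdw3
    have hgood := good_vertex (φ (y 3)) (φ x) i1 i2 i3 d1 d2 d3 h12 h13 h23 e1 e2 e3 α
      (φ x i2 * d2) hα' hne h3.1 h3.2.1 h3.2.2 (by linarith) rfl (by linarith)
      (by rw [dot_comm, hφ, if_neg x3, if_neg nadj]) (by rw [hself]; exact w5 x)
      (by rw [hself]; exact w5 _) (by
        rw [hself, hself]
        intro hx4
        have := dw x
        have := hd x
        have : ¬ 1 < C.adjw (y 3) := fun hh => x3 (w3 _ _ (by omega) hh)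
        push_cast at hdw3
        omega)
    rw [hself, ← hv1, ← hv2] at hgood
    exact hno ⟨x, hgood⟩
  have hz : ∀ i, a ≤ i → i ≤ -1 ∨ i = 5 →
      φ (y i) i1 * d1 = 0 ∧ φ (y i) i2 * d2 = 0 ∧ φ (y i) i3 * d3 = 0 := by
    intro i hi hi'
    have nn : ∀ j, 0 ≤ j → j ≤ 3 → y i ≠ y j := by
      intro j hj hj' he
      have := h.inj hac _ _ (by omega) (by omega) (by omega) (by omega) he
      omega
    refine other (y i) (nn 0 (by omega) (by omega)) (nn 1 (by omega) (by omega))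
      (nn 2 (by omega) (by omega)) (nn 3 (by omega) (by omega)) ?_
    rw [h.adj hac _ _ (by omega) (by omega) (by omega) (by omega)]
    omega
  have core := mk α β c (quad_key (fun i => φ (y i)) (fun i => C.w (y i)) a ha
    (fun i j hi hi' hj hj' => hdot i j hi (by omega) hj (by omega)) i1 i2 i3 d1 d2 d3 h12 h13 h23
    e1 e2 e3 α β c hz h0 h3 h4)
  have h000 : α = 0 ∧ β = 0 ∧ c = 0 := by
    rcases hα' with rfl | rfl <;> rcases hβ' with rfl | rfl <;> rcases hc' with rfl | rfl | rfl
    · exact ⟨rfl, rfl, rfl⟩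
    · exact core.case_0_0_1.elim
    · exact core.case_0_0_m1.elim
    · exact core.case_0_1_0.elim
    · exact core.case_0_1_1.elim
    · exact core.case_0_1_m1.elim
    · exact core.case_m1_0_0.elim
    · exact core.case_m1_0_1.elim
    · exact core.case_m1_0_m1.elim
    · exact core.case_m1_1_0.elim
    · exact core.case_m1_1_1.elim
    · exact core.case_m1_1_m1.elim
  obtain ⟨r1, r2, r3⟩ := h000
  have hei : e = i3 := by
    by_contra hc3
    by_cases hc2 : e = i2
    · subst hc2
      have := h3.2.1
      rw [r1] at this
      rcases mul_eq_zero.1 this with q | q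
      · exact he3 q
      · exact d20 q
    · apply he2
      rw [hv2]
      simp [hc2, hc3]
  subst hei
  apply hnotclean
  intro u u2 u3
  have fin : φ u e * d3 = 0 → φ u e = 0 := fun hh => (mul_eq_zero.1 hh).resolve_right d30
  by_cases u0 : u = y 0
  · subst u0; exact fin (by rw [h0.2.2, r2])
  by_cases u1 : u = y 1
  · subst u1
    rw [hv1]
    simp [h13.symm, h23.symm]
  by_cases ua : C.graph.Adj u (y 3)
  · rcases adjy 3 (by omega) (by omega) u ua.symm with q | q
    · exact absurd (by simpa using q) u2
    · have q : u = y 4 := by simpa using q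
      subst q
      exact fin (by rw [h4.2.2, r3])
  · exact fin (other u u0 u1 u2 u3 ua).2.2

end LensPaper
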